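/- arXiv:2002.02727 — 2 statements merged into one kernel-verified Lean document; each statement's English description precedes it below -/
import Mathlib

section
/- Let k be a perfect field and let A and B be two complete Noetherian local commutative rings containing k, with maximal ideals m and n respectively, such that A⊗̂_k B is Noetherian. Assume A and B are integrally closed domains. Then A⊗̂_k B is a domain if and only if the prime spectrum of (A/m)⊗_k(B/n) is connected, equivalently (A/m)⊗_k(B/n) has no idempotents other than 0 and 1. -/
open TensorProduct

/-- The ideal `r = m ⊗ B + A ⊗ n` of `C = A ⊗[k] B`, where `m` and `n` are the Jacobson
radicals of `A` and `B` (for a local ring, the Jacobson radical is the maximal ideal). -/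
noncomputable def tensorRadical (k A B : Type*) [Field k] [CommRing A] [CommRing B]
    [Algebra k A] [Algebra k B] : Ideal (A ⊗[k] B) :=
  Ideal.map (Algebra.TensorProduct.includeLeft (R := k) (S := k) (A := A) (B := B))
      ((⊥ : Ideal A).jacobson) ⊔
    Ideal.map (Algebra.TensorProduct.includeRight (R := k) (A := A) (B := B))
      ((⊥ : Ideal B).jacobson)

/-- The completed tensor product `A ⊗̂[k] B`: the `r`-adic separated completion of
`C = A ⊗[k] B`, i.e. the inverse limit of the rings `C ⧸ r ^ i`. -/
noncomputable abbrev CompletedTensor (k A B : Type*) [Field k] [CommRing A] [CommRing B]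
    [Algebra k A] [Algebra k B] : Type _ :=
  AdicCompletion (tensorRadical k A B) (A ⊗[k] B)

universe u v

lemma cauchy_le {C : Type*} [CommRing C] (F : ℕ → Ideal C) (hF : Antitone F) (f : ℕ → C)
    (hf : ∀ n, f (n+1) - f n ∈ F n) {m n : ℕ} (h : m ≤ n) : f n - f m ∈ F m := by
  induction n, h using Nat.le_induction with
  | base => simp
  | succ n hmn ih =>
    have := (F m).add_mem (hF hmn (hf n)) ih
    simpa using this

lemma exists_lim {R : Type*} [CommRing R] (I : Ideal R) [IsPrecomplete I R] (f : ℕ → R)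
    (hf : ∀ n, f (n+1) - f n ∈ I ^ n) : ∃ L, ∀ n, f n - L ∈ I ^ n := by
  obtain ⟨L, hL⟩ := IsPrecomplete.prec (I := I) (M := R) inferInstance (f := f) (by
    intro m n h
    have := cauchy_le (fun n => I ^ n) (fun a b h => Ideal.pow_le_pow_right h) f hf h
    rw [SModEq.sub_mem, ← neg_sub, neg_mem_iff]
    simpa using this)
  refine ⟨L, fun n => ?_⟩
  have := hL n
  rw [SModEq.sub_mem] at this
  simpa using this

lemma eq_zero_of_haus {R : Type*} [CommRing R] (I : Ideal R) [IsHausdorff I R] (x : R)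
    (hx : ∀ n, x ∈ I ^ n) : x = 0 := by
  apply IsHausdorff.haus (I := I) (M := R) inferInstance
  intro n
  rw [SModEq.zero]
  simpa using hx n

lemma isNoetherianRing_of_complete {R : Type*} [CommRing R] (I : Ideal R) [IsAdicComplete I R]
    (hI : I.FG) [IsNoetherianRing (R ⧸ I)] : IsNoetherianRing R := by
  by_contra hN
  have hmax : ∃ J : Ideal R, Maximal (¬ Ideal.FG ·) J := by
    obtain ⟨J, hJ⟩ : ∃ J : Ideal R, ¬ J.FG := by
      by_contra! h
      exact hN ⟨h⟩
    obtain ⟨M, _, hM⟩ : ∃ M, J ≤ M ∧ Maximal (¬ Ideal.FG ·) M := by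
      refine zorn_le_nonempty₀ {I : Ideal R | ¬ I.FG}
        (fun C hC₁ hC₂ J hJ ↦ ⟨sSup C, ?_, fun _ ↦ le_sSup⟩) J hJ
      intro h
      have h0 := h
      obtain ⟨G, hG⟩ := h
      obtain ⟨J, J_mem_C, G_subset_J⟩ : ∃ J ∈ C, (G : Set R) ⊆ J := by
        refine hC₂.directedOn.exists_mem_subset_of_finset_subset_biUnion ⟨_, hJ⟩ (fun _ hx ↦ ?_)
        simp only [Set.mem_iUnion, SetLike.mem_coe, exists_prop]
        exact (Submodule.mem_sSup_of_directed ⟨_, hJ⟩ hC₂.directedOn).1 <|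
          hG ▸ Ideal.subset_span hx
      have : J = sSup C := le_antisymm (le_sSup J_mem_C) (hG ▸ Ideal.span_le.2 G_subset_J)
      exact hC₁ J_mem_C (this ▸ h0)
    exact ⟨M, hM⟩
  obtain ⟨J, hJ⟩ := hmax
  have hp : J.IsPrime := Ideal.isOka_fg.isPrime_of_maximal_not hJ
  by_cases hIJ : I ≤ J
  · apply hJ.prop
    have h1 : (J.map (Ideal.Quotient.mk I)).FG := IsNoetherian.noetherian _
    apply Submodule.fg_of_fg_map_of_fg_inf_ker (Submodule.mkQ I)
    · have : J.map (Ideal.Quotient.mk I) = J.map (Ideal.Quotient.mkₐ R I) := rfl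
      have h2 : (Submodule.map (Submodule.mkQ I) J : Submodule R (R ⧸ I)) =
          (J.map (Ideal.Quotient.mk I)).restrictScalars R := by
        ext x
        simp only [Submodule.mem_map, Submodule.restrictScalars_mem,
          Ideal.mem_map_iff_of_surjective _ (Ideal.Quotient.mk_surjective (I := I))]
        rfl
      rw [h2]
      exact Submodule.FG.restrictScalars_of_surjective h1 Ideal.Quotient.mk_surjective
    · rw [Submodule.ker_mkQ, inf_eq_right.2 hIJ]
      exact hI
  · obtain ⟨x, hxI, hxJ⟩ := SetLike.not_le_iff_exists.1 hIJ
    have h1 : (J ⊔ Ideal.span {x}).FG := by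
      by_contra h
      exact hxJ (hJ.le_of_ge h le_sup_left (Ideal.mem_sup_right (Ideal.subset_span rfl)))
    obtain ⟨n, f, hf⟩ := Submodule.fg_iff_exists_fin_generating_family.1 h1
    have H : ∀ k, ∃ r : R, ∃ p ∈ J, r * x + p = f k := fun k => by
      apply Ideal.mem_span_singleton_sup.1
      rw [sup_comm, ← hf]
      exact Ideal.subset_span ⟨k, rfl⟩
    choose r p hpJ hrp using H
    have step : ∀ z ∈ J, ∃ (c : Fin n → R) (z' : R), z' ∈ J ∧ z = ∑ i, c i * p i + x * z' := by
      intro z hz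
      have hz' : z ∈ Ideal.span (Set.range f) := by
        have : z ∈ J ⊔ Ideal.span {x} := Ideal.mem_sup_left hz
        rwa [← hf] at this
      obtain ⟨c, hc⟩ := Ideal.mem_span_range_iff_exists_fun.1 hz'
      have e : z = ∑ i, c i * p i + x * ∑ i, c i * r i := by
        rw [← hc, Finset.mul_sum, ← Finset.sum_add_distrib]
        refine Finset.sum_congr rfl fun i _ => ?_
        rw [← hrp]; ring
      refine ⟨c, ∑ i, c i * r i, ?_, e⟩
      have h2 : x * ∑ i, c i * r i ∈ J := by
        have : x * ∑ i, c i * r i = z - ∑ i, c i * p i := by rw [e]; ring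
        rw [this]
        exact J.sub_mem hz (J.sum_mem fun i _ => J.mul_mem_left _ (hpJ i))
      exact (hp.mem_or_mem h2).resolve_left hxJ
    choose! c z' hz' hstep using step
    apply hJ.prop
    refine Submodule.fg_iff_exists_fin_generating_family.2 ⟨n, p, ?_⟩
    apply le_antisymm
    · exact Submodule.span_le.2 (by rintro _ ⟨i, rfl⟩; exact hpJ i)
    intro z hz
    let Z : ℕ → R := fun j => z'^[j] z
    have hZ : ∀ j, Z j ∈ J := by
      intro j
      induction j with
      | zero => exact hz
      | succ j ih => simp only [Z, Function.iterate_succ_apply'] at ih ⊢; exact hz' _ ih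
    let s : Fin n → ℕ → R := fun i N => ∑ j ∈ Finset.range N, x ^ j * c (Z j) i
    have hs : ∀ N, z = ∑ i, s i N * p i + x ^ N * Z N := by
      intro N
      induction N with
      | zero => simp [s, Z]
      | succ N ih =>
        have e1 : Z (N+1) = z' (Z N) := by simp only [Z, Function.iterate_succ_apply']
        have e2 := hstep (Z N) (hZ N)
        have e3 : ∑ i, s i (N+1) * p i = ∑ i, s i N * p i + x ^ N * ∑ i, c (Z N) i * p i := by
          rw [Finset.mul_sum, ← Finset.sum_add_distrib]
          refine Finset.sum_congr rfl fun i _ => ?_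
          simp only [s, Finset.sum_range_succ]; ring
        rw [e3, e1]
        rw [e2] at ih
        rw [ih]; ring
    have hlim : ∀ i, ∃ L, ∀ N, s i N - L ∈ I ^ N := by
      intro i
      apply exists_lim
      intro N
      simp only [s, Finset.sum_range_succ]
      rw [add_sub_cancel_left]
      exact Ideal.mul_mem_right _ _ (Ideal.pow_mem_pow hxI N)
    choose L hL using hlim
    have : z - ∑ i, L i * p i = 0 := by
      apply eq_zero_of_haus I
      intro N
      have e : z - ∑ i, L i * p i = ∑ i, (s i N - L i) * p i + x ^ N * Z N := by
        nth_rw 1 [hs N]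
        simp only [sub_mul, Finset.sum_sub_distrib]; ring
      rw [e]
      exact Ideal.add_mem _ (Ideal.sum_mem _ fun i _ => Ideal.mul_mem_right _ _ (hL i N))
        (Ideal.mul_mem_right _ _ (Ideal.pow_mem_pow hxI N))
    rw [sub_eq_zero.1 this]
    exact Ideal.sum_mem _ fun i _ => Ideal.mul_mem_left _ _ (Ideal.subset_span ⟨i, rfl⟩)


/-- functional lemma -/
lemma exists_functional (k k₁ X Y : Type*) [Field k] [Field k₁] [Algebra k k₁]
    [AddCommGroup X] [Module k X] [Module k₁ X] [IsScalarTower k k₁ X]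
    [AddCommGroup Y] [Module k Y] (z : X ⊗[k] Y) (hz : z ≠ 0) :
    ∃ φ : X →ₗ[k₁] k₁, LinearMap.rTensor Y (φ.restrictScalars k) z ≠ 0 := by
  classical
  by_contra! h
  let b := Module.Basis.ofVectorSpace k₁ X
  let e : X ⊗[k] Y ≃ₗ[k] _ :=
    (TensorProduct.congr (b.repr.restrictScalars k) (LinearEquiv.refl k Y)).trans
    (TensorProduct.finsuppLeft k k k₁ Y _)
  apply hz
  apply e.injective
  rw [map_zero]
  ext i
  have key : ∀ w, e w i = LinearMap.rTensor Y ((b.coord i).restrictScalars k) w := by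
    intro w
    induction w with
    | zero => simp
    | add x y hx hy => simp only [map_add, Finsupp.add_apply, hx, hy]
    | tmul x y => 
      simp [e, TensorProduct.finsuppLeft_apply_tmul_apply]
  rw [key, h]
  rfl

section
variable {k S R : Type*} [Field k] [CommRing S] [CommRing R] [Algebra k S] [Algebra k R]

/-- the ideal `I ⊗ R + S ⊗ K` of `S ⊗ R`. -/
noncomputable def tf (k : Type*) {S R : Type*} [Field k] [CommRing S] [CommRing R] [Algebra k S]
    [Algebra k R] (I : Ideal S) (K : Ideal R) : Ideal (S ⊗[k] R) :=
  Ideal.map (Algebra.TensorProduct.includeLeft (R := k) (S := k) (A := S) (B := R)) I ⊔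
    Ideal.map (Algebra.TensorProduct.includeRight (R := k) (A := S) (B := R)) K

/-- slicing along a functional. -/
noncomputable def slice (R : Type*) [CommRing R] [Algebra k R] (φ : S →ₗ[k] k) :
    S ⊗[k] R →ₗ[k] R :=
  (TensorProduct.lid k R).toLinearMap ∘ₗ LinearMap.rTensor R φ

@[simp] lemma slice_tmul (φ : S →ₗ[k] k) (s : S) (r : R) : slice R φ (s ⊗ₜ r) = φ s • r := by
  simp [slice]

lemma slice_mul_right (φ : S →ₗ[k] k) (z : S ⊗[k] R) (r : R) :
    slice R φ (z * (1 ⊗ₜ r)) = slice R φ z * r := by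
  induction z with
  | zero => simp
  | add x y hx hy => simp only [map_add, add_mul, hx, hy]
  | tmul x y => simp

lemma slice_map {R' : Type*} [CommRing R'] [Algebra k R'] (g : R →ₐ[k] R') (φ : S →ₗ[k] k)
    (z : S ⊗[k] R) :
    slice R' φ (Algebra.TensorProduct.map (AlgHom.id k S) g z) = g (slice R φ z) := by
  induction z with
  | zero => simp
  | add x y hx hy => simp only [map_add, hx, hy]
  | tmul x y => simp

lemma tf_eq_ker (I : Ideal S) (K : Ideal R) :
    tf k I K = RingHom.ker (Algebra.TensorProduct.map (Ideal.Quotient.mkₐ k I)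
      (Ideal.Quotient.mkₐ k K)) := by
  rw [Algebra.TensorProduct.map_ker]
  · have h1 : RingHom.ker (Ideal.Quotient.mkₐ k I) = I := Ideal.Quotient.mkₐ_ker k I
    have h2 : RingHom.ker (Ideal.Quotient.mkₐ k K) = K := Ideal.Quotient.mkₐ_ker k K
    rw [h1, h2]; rfl
  · exact Ideal.Quotient.mkₐ_surjective _ _
  · exact Ideal.Quotient.mkₐ_surjective _ _

lemma slice_quot (I : Ideal S) (K : Ideal R) (φ : (S ⧸ I) →ₗ[k] k) (z : S ⊗[k] R) :
    slice (R ⧸ K) φ (Algebra.TensorProduct.map (Ideal.Quotient.mkₐ k I)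
      (Ideal.Quotient.mkₐ k K) z) =
    Ideal.Quotient.mk K (slice R (φ ∘ₗ (Ideal.Quotient.mkₐ k I).toLinearMap) z) := by
  induction z with
  | zero => simp
  | add x y hx hy => simp only [map_add, hx, hy]
  | tmul x y =>
    simp only [Algebra.TensorProduct.map_tmul, slice_tmul]
    rfl

lemma mem_tf_iff (I : Ideal S) (K : Ideal R) (z : S ⊗[k] R) :
    z ∈ tf k I K ↔ ∀ φ : S →ₗ[k] k, (∀ x ∈ I, φ x = 0) → slice R φ z ∈ K := by
  rw [tf_eq_ker, RingHom.mem_ker]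
  constructor
  · intro hz φ hφ
    let φ' : (S ⧸ I) →ₗ[k] k := (Submodule.liftQ (I.restrictScalars k) φ hφ) ∘ₗ
      (Submodule.Quotient.restrictScalarsEquiv k I).symm.toLinearMap
    have e : φ = φ' ∘ₗ (Ideal.Quotient.mkₐ k I).toLinearMap := by
      ext x; rfl
    rw [e, ← Ideal.Quotient.eq_zero_iff_mem, ← slice_quot, hz, map_zero]
  · intro h
    by_contra hne
    obtain ⟨φ, hφ⟩ := exists_functional k k _ _ _ hne
    apply hφ
    have h1 := h (φ ∘ₗ (Ideal.Quotient.mkₐ k I).toLinearMap) (by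
      intro x hx
      have : Ideal.Quotient.mkₐ k I x = 0 := Ideal.Quotient.eq_zero_iff_mem.2 hx
      simp only [LinearMap.comp_apply, AlgHom.toLinearMap_apply, this, map_zero])
    rw [← Ideal.Quotient.eq_zero_iff_mem, ← slice_quot] at h1
    apply (TensorProduct.lid k (R ⧸ K)).injective
    rw [map_zero]
    exact h1

lemma tf_mono {I I' : Ideal S} {K K' : Ideal R} (h : I ≤ I') (h' : K ≤ K') :
    tf k I K ≤ tf k I' K' :=
  sup_le_sup (Ideal.map_mono h) (Ideal.map_mono h')

lemma tf_antitone (J : Ideal S) (m : Ideal R) : Antitone fun n => tf k (J ^ n) (m ^ n) :=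
  fun _ _ h => tf_mono (Ideal.pow_le_pow_right h) (Ideal.pow_le_pow_right h)

lemma map_mem_tf_iff {R' : Type*} [CommRing R'] [Algebra k R'] (g : R →ₐ[k] R') (I : Ideal S)
    (K' : Ideal R') (z : S ⊗[k] R) :
    Algebra.TensorProduct.map (AlgHom.id k S) g z ∈ tf k I K' ↔ z ∈ tf k I (K'.comap g) := by
  simp only [mem_tf_iff, slice_map, Ideal.mem_comap]

end

/-- The completion with respect to a filtration is a domain, expressed by Cauchy sequences. -/
def CDom {C : Type*} [CommRing C] (F : ℕ → Ideal C) : Prop :=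
  ∀ f g : ℕ → C, (∀ n, f (n+1) - f n ∈ F n) → (∀ n, g (n+1) - g n ∈ F n) →
    (∀ n, f n * g n ∈ F n) → (∀ n, f n ∈ F n) ∨ (∀ n, g n ∈ F n)

lemma CDom.transfer {C C' : Type*} [CommRing C] [CommRing C'] (ψ : C →+* C') (F : ℕ → Ideal C)
    (F' : ℕ → Ideal C') (h : ∀ n z, ψ z ∈ F' n ↔ z ∈ F n) (H : CDom F') : CDom F := by
  intro f g hf hg hfg
  have := H (fun n => ψ (f n)) (fun n => ψ (g n))
    (fun n => by rw [← map_sub, h]; exact hf n) (fun n => by rw [← map_sub, h]; exact hg n)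
    (fun n => by rw [← map_mul, h]; exact hfg n)
  simpa only [h] using this

section
variable {k S V : Type*} [Field k] [CommRing S] [CommRing V] [Algebra k S] [Algebra k V]

lemma tf_cancel [IsDomain V] (t : V) (ht : t ≠ 0) (I : Ideal S) (a b : ℕ) (z : S ⊗[k] V)
    (hz : z * (1 ⊗ₜ (t ^ a)) ∈ tf k I (Ideal.span {t ^ (a + b)})) :
    z ∈ tf k I (Ideal.span {t ^ b}) := by
  rw [mem_tf_iff] at hz ⊢
  intro φ hφ
  have := hz φ hφ
  rw [slice_mul_right, Ideal.mem_span_singleton, pow_add, mul_comm (slice V φ z)] at this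
  rw [Ideal.mem_span_singleton]
  exact (mul_dvd_mul_iff_left (pow_ne_zero a ht)).1 this

lemma tf_decomp (t : V) (I : Ideal S) (a : ℕ) (z : S ⊗[k] V)
    (hz : z ∈ tf k I (Ideal.span {t ^ a})) :
    ∃ h : S ⊗[k] V, ∀ K : Ideal V, z - h * (1 ⊗ₜ (t ^ a)) ∈ tf k I K := by
  rw [tf, Ideal.map_span, Set.image_singleton] at hz
  obtain ⟨u, hu, v, hv, rfl⟩ := Submodule.mem_sup.1 hz
  obtain ⟨h, rfl⟩ := Ideal.mem_span_singleton'.1 hv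
  refine ⟨h, fun K => ?_⟩
  simp only [Algebra.TensorProduct.includeRight_apply, add_sub_cancel_right]
  exact Ideal.mem_sup_left hu

lemma lead_exists (t : V) (J : Ideal S) (f : ℕ → S ⊗[k] V)
    (hf : ∀ n, f (n+1) - f n ∈ tf k (J ^ n) (Ideal.span {t} ^ n))
    (h0 : ¬ ∀ n, f n ∈ tf k (J ^ n) (Ideal.span {t} ^ n)) :
    ∃ a n₁, (∀ n, a ≤ n → f n ∈ tf k (J ^ n) (Ideal.span {t ^ a})) ∧
      (∀ n, n₁ ≤ n → f n ∉ tf k (J ^ n₁) (Ideal.span {t ^ (a+1)})) := by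
  classical
  push Not at h0
  obtain ⟨n0, hn0⟩ := h0
  have hex : ∃ a, ¬ (∀ n, a ≤ n → f n ∈ tf k (J ^ n) (Ideal.span {t ^ a})) := by
    refine ⟨n0, fun h => hn0 ?_⟩
    rw [Ideal.span_singleton_pow]
    exact h n0 le_rfl
  have h1 := Nat.find_spec hex
  have hpos : Nat.find hex ≠ 0 := by
    intro h
    rw [h] at h1
    apply h1
    intro n _
    rw [mem_tf_iff]
    intro φ _
    simp
  obtain ⟨a, ha⟩ := Nat.exists_eq_succ_of_ne_zero hpos
  have h2 : ¬¬ _ := Nat.find_min hex (m := a) (by omega)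
  rw [ha] at h1
  push Not at h1 h2
  obtain ⟨n₁, hn₁, h3⟩ := h1
  refine ⟨a, n₁, h2, ?_⟩
  intro n hn hc
  apply h3
  have h4 := cauchy_le _ (tf_antitone J (Ideal.span {t})) f hf hn
  have h5 : f n - f n₁ ∈ tf k (J ^ n₁) (Ideal.span {t ^ (a+1)}) := by
    refine tf_mono le_rfl ?_ h4
    rw [← Ideal.span_singleton_pow]
    exact Ideal.pow_le_pow_right hn₁
  have := Ideal.sub_mem _ hc h5
  simpa using this

lemma CDom_leading [IsDomain V] (t : V) (ht : t ≠ 0) (J : Ideal S)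
    (H : CDom (fun n => tf k (J ^ n) (⊥ : Ideal (V ⧸ Ideal.span {t})))) :
    CDom (fun n => tf k (J ^ n) (Ideal.span {t} ^ n)) := by
  intro f g hf hg hfg
  by_contra! hcon
  obtain ⟨a, n₁, ha, hn₁⟩ := lead_exists t J f hf (by push Not; exact hcon.1)
  obtain ⟨b, n₂, hb, hn₂⟩ := lead_exists t J g hg (by push Not; exact hcon.2)
  have hdf : ∀ n, ∃ h : S ⊗[k] V, a ≤ n → ∀ K : Ideal V,
      f n - h * (1 ⊗ₜ (t ^ a)) ∈ tf k (J ^ n) K := fun n => by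
    by_cases h : a ≤ n
    · obtain ⟨x, hx⟩ := tf_decomp t _ a _ (ha n h)
      exact ⟨x, fun _ => hx⟩
    · exact ⟨0, fun h' => absurd h' h⟩
  have hdg : ∀ n, ∃ h : S ⊗[k] V, b ≤ n → ∀ K : Ideal V,
      g n - h * (1 ⊗ₜ (t ^ b)) ∈ tf k (J ^ n) K := fun n => by
    by_cases h : b ≤ n
    · obtain ⟨x, hx⟩ := tf_decomp t _ b _ (hb n h)
      exact ⟨x, fun _ => hx⟩
    · exact ⟨0, fun h' => absurd h' h⟩
  choose p hp using hdf
  choose q hq using hdg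
  have cau : ∀ (f p : ℕ → S ⊗[k] V) (a : ℕ),
      (∀ n, f (n+1) - f n ∈ tf k (J ^ n) (Ideal.span {t} ^ n)) →
      (∀ n, a ≤ n → ∀ K : Ideal V, f n - p n * (1 ⊗ₜ (t ^ a)) ∈ tf k (J ^ n) K) →
      ∀ n, a + 1 ≤ n → p (n+1) - p n ∈ tf k (J ^ n) (Ideal.span {t ^ 1}) := by
    intro f p a hf hp n hn
    apply tf_cancel t ht _ a 1
    have e : (p (n+1) - p n) * (1 ⊗ₜ (t ^ a)) = (f (n+1) - f n)
      - (f (n+1) - p (n+1) * (1 ⊗ₜ (t ^ a))) + (f n - p n * (1 ⊗ₜ (t ^ a))) := by ring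
    rw [e]
    refine Ideal.add_mem _ (Ideal.sub_mem _ ?_ ?_) (hp n (by omega) _)
    · refine tf_mono le_rfl ?_ (hf n)
      rw [← Ideal.span_singleton_pow]
      exact Ideal.pow_le_pow_right hn
    · exact tf_mono (Ideal.pow_le_pow_right (Nat.le_succ n)) le_rfl (hp (n+1) (by omega) _)
  let π : S ⊗[k] V →ₐ[k] S ⊗[k] (V ⧸ Ideal.span {t}) :=
    Algebra.TensorProduct.map (AlgHom.id k S) (Ideal.Quotient.mkₐ k (Ideal.span {t}))
  have hπ : ∀ (I : Ideal S) z, π z ∈ tf k I ⊥ ↔ z ∈ tf k I (Ideal.span {t ^ 1}) := by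
    intro I z
    rw [map_mem_tf_iff]
    have : Ideal.comap (Ideal.Quotient.mkₐ k (Ideal.span {t})) ⊥ = Ideal.span {t ^ 1} := by
      rw [pow_one]
      exact Ideal.Quotient.mkₐ_ker k (Ideal.span {t})
    rw [this]
  have non : ∀ (f p : ℕ → S ⊗[k] V) (a n₁ N : ℕ),
      (∀ n, n₁ ≤ n → f n ∉ tf k (J ^ n₁) (Ideal.span {t ^ (a+1)})) →
      (∀ n, a ≤ n → ∀ K : Ideal V, f n - p n * (1 ⊗ₜ (t ^ a)) ∈ tf k (J ^ n) K) → a ≤ N →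
      ¬ ∀ n, π (p (n + N)) ∈ tf k (J ^ n) ⊥ := by
    intro f p a n₁ N hn₁ hp haN hall
    have h1 := (hπ _ _).1 (hall n₁)
    apply hn₁ (n₁ + N) (by omega)
    have h2 := hp (n₁ + N) (by omega) (Ideal.span {t ^ (a+1)})
    have h3 := tf_mono (k := k) (Ideal.pow_le_pow_right (I := J) (Nat.le_add_right n₁ N))
      (le_refl (Ideal.span {t ^ (a+1)})) h2
    have h4 : p (n₁ + N) * (1 ⊗ₜ (t ^ a)) ∈ tf k (J ^ n₁) (Ideal.span {t ^ (a+1)}) := by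
      rw [mem_tf_iff] at h1 ⊢
      intro φ hφ
      have h5 := h1 φ hφ
      rw [Ideal.mem_span_singleton] at h5 ⊢
      rw [slice_mul_right, pow_succ, mul_comm (t ^ a)]
      rw [pow_one] at h5
      exact mul_dvd_mul_right h5 _
    have := Ideal.add_mem _ h3 h4
    simpa using this
  have := H (fun n => π (p (n + (a+b+1)))) (fun n => π (q (n + (a+b+1)))) ?_ ?_ ?_
  · rcases this with h | h
    · exact non f p a n₁ (a+b+1) hn₁ hp (by omega) h
    · exact non g q b n₂ (a+b+1) hn₂ hq (by omega) h
  · intro n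
    rw [← map_sub, hπ]
    have := cau f p a hf hp (n + (a+b+1)) (by omega)
    rw [add_right_comm]
    exact tf_mono (Ideal.pow_le_pow_right (by omega)) le_rfl this
  · intro n
    rw [← map_sub, hπ]
    have := cau g q b hg hq (n + (a+b+1)) (by omega)
    rw [add_right_comm]
    exact tf_mono (Ideal.pow_le_pow_right (by omega)) le_rfl this
  · intro n
    rw [← map_mul, hπ]
    set N := n + (a+b+1) with hN
    refine tf_mono (Ideal.pow_le_pow_right (show n ≤ N by omega)) le_rfl ?_
    apply tf_cancel t ht _ (a+b) 1
    have h1 : (1 ⊗ₜ (t ^ (a+b)) : S ⊗[k] V) = (1 ⊗ₜ (t ^ a)) * (1 ⊗ₜ (t ^ b)) := by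
      simp [pow_add]
    have e : p N * q N * (1 ⊗ₜ (t ^ (a+b))) = f N * g N -
      (f N - p N * (1 ⊗ₜ (t ^ a))) * (q N * (1 ⊗ₜ (t ^ b))) -
        f N * (g N - q N * (1 ⊗ₜ (t ^ b))) := by rw [h1]; ring
    rw [e]
    refine Ideal.sub_mem _ (Ideal.sub_mem _ ?_ ?_) ?_
    · refine tf_mono le_rfl ?_ (hfg N)
      rw [← Ideal.span_singleton_pow]
      exact Ideal.pow_le_pow_right (by omega)
    · exact Ideal.mul_mem_right _ _ (hp N (by omega) _)
    · exact Ideal.mul_mem_left _ _ (hq N (by omega) _)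
end


section
variable {D : Type*} [CommRing D] [IsDomain D] [IsNoetherianRing D] [IsLocalRing D]

lemma max_mem_minimalPrimes (d : D) (hd0' : d ≠ 0)
    (hd : ∀ p : Ideal D, p.IsPrime → p ≠ ⊥ → d ∈ p) (hdm : d ∈ IsLocalRing.maximalIdeal D)
    (I : Ideal D) (hI : I ≠ ⊥) (hI' : I ≤ IsLocalRing.maximalIdeal D) :
    IsLocalRing.maximalIdeal D ∈ I.minimalPrimes := by
  have key : IsLocalRing.maximalIdeal D ∈ (Ideal.span {d}).minimalPrimes := by
    by_contra hcon
    have hfin := (Ideal.span {d}).finite_minimalPrimes_of_isNoetherianRing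
    have hnot := mt (Ideal.subset_union_prime_finite hfin (f := id) ⊥ ⊥
      (I := IsLocalRing.maximalIdeal D) (fun i hi _ _ => hi.1.1)).1 (by
        rintro ⟨P, hP, hle⟩
        have hPp : P.IsPrime := hP.1.1
        have : IsLocalRing.maximalIdeal D = P :=
          (IsLocalRing.maximalIdeal.isMaximal D).eq_of_le hPp.ne_top hle
        exact hcon (this ▸ hP))
    rw [Set.not_subset] at hnot
    obtain ⟨y, hy, hyn⟩ := hnot
    simp only [id, Set.mem_iUnion, not_exists] at hyn
    obtain ⟨Q, hQ, hQle⟩ := Ideal.exists_minimalPrimes_le (I := Ideal.span {y})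
      (J := IsLocalRing.maximalIdeal D) (by rwa [Ideal.span_singleton_le_iff_mem])
    have hQp : Q.IsPrime := hQ.1.1
    have hyQ : y ∈ Q := hQ.1.2 (Ideal.mem_span_singleton_self y)
    have hQ0 : Q ≠ ⊥ := by
      rintro rfl
      have hy0 : y = 0 := hyQ
      obtain ⟨P, hP, -⟩ := Ideal.exists_minimalPrimes_le (I := Ideal.span {d})
        (J := IsLocalRing.maximalIdeal D) (by rwa [Ideal.span_singleton_le_iff_mem])
      exact hyn P hP (by rw [hy0]; exact P.zero_mem)
    have hdQ := hd Q hQp hQ0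
    obtain ⟨P, hP, hPQ⟩ := Ideal.exists_minimalPrimes_le (I := Ideal.span {d})
        (J := Q) (by rwa [Ideal.span_singleton_le_iff_mem])
    have hPp : P.IsPrime := hP.1.1
    have hlt : P < Q := lt_of_le_of_ne hPQ (by rintro rfl; exact hyn P hP hyQ)
    have h1 := Ideal.height_le_one_of_isPrincipal_of_mem_minimalPrimes _ Q hQ
    have h2 := Ideal.height_add_one_le_of_lt_of_isPrime hlt
    have h3 : P.height ≠ 0 := by
      intro h0
      have : P = ⊥ := by
        by_contra hne
        have h4 : (⊥ : Ideal D) < P := bot_lt_iff_ne_bot.2 hne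
        have h5 : (⊥ : Ideal D).IsPrime := Ideal.isPrime_bot
        have h6 := Ideal.height_add_one_le_of_lt_of_isPrime h4
        rw [h0] at h6
        simp at h6
      subst this
      have hd0 : d = 0 := hP.1.2 (Ideal.mem_span_singleton_self d)
      exact hd0' hd0
    have h9 := h2.trans h1
    have h10 : (1 : ℕ∞) ≤ P.height := Order.one_le_iff_pos.2 (pos_iff_ne_zero.2 h3)
    have h11 : (1 + 1 : ℕ∞) ≤ 1 := (add_le_add_left h10 1).trans h9
    exact absurd h11 (by decide)
  refine ⟨⟨inferInstance, hI'⟩, fun P hP hle => ?_⟩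
  have hPp : P.IsPrime := hP.1
  have hP0 : P ≠ ⊥ := by
    rintro rfl
    exact hI (le_bot_iff.1 hP.2)
  exact key.2 ⟨hPp, by rw [Ideal.span_singleton_le_iff_mem]; exact hd P hPp hP0⟩ hle


lemma length_quot_le {D M : Type*} [CommRing D] [IsDomain D] [AddCommGroup M] [Module D M]
    (j : M →ₗ[D] D)
    (hj : Function.Injective j) (d : D) (hd : d ≠ 0)
    (hfin : Module.length D (D ⧸ LinearMap.range j) ≠ ⊤) :
    Module.length D (M ⧸ (Submodule.map (LinearMap.lsmul D M d) ⊤)) ≤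
      Module.length D (D ⧸ Ideal.span {d}) := by
  let 𝔞 : Submodule D D := LinearMap.range j
  let P : Submodule D D := Submodule.map (LinearMap.lsmul D D d) 𝔞
  have hPa : P ≤ 𝔞 := by
    rintro _ ⟨a, ha, rfl⟩
    exact 𝔞.smul_mem d ha
  have hPd : P ≤ Ideal.span {d} := by
    rintro _ ⟨a, ha, rfl⟩
    exact Ideal.mul_mem_right _ _ (Ideal.mem_span_singleton_self d)
  let f1 : (M ⧸ (Submodule.map (LinearMap.lsmul D M d) ⊤)) →ₗ[D] D ⧸ P :=
    Submodule.mapQ _ _ j (by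
      rintro _ ⟨a, ha, rfl⟩
      exact ⟨j a, ⟨a, rfl⟩, by simp⟩)
  let g1 : (D ⧸ P) →ₗ[D] D ⧸ 𝔞 := Submodule.factor hPa
  have e1 := Module.length_eq_add_of_exact f1 g1 (by
    rw [injective_iff_map_eq_zero]
    intro x hx
    obtain ⟨x, rfl⟩ := Submodule.Quotient.mk_surjective _ x
    rw [Submodule.mapQ_apply, Submodule.Quotient.mk_eq_zero] at hx
    obtain ⟨_, ⟨a, rfl⟩, ha⟩ := hx
    rw [Submodule.Quotient.mk_eq_zero]
    refine ⟨a, trivial, hj ?_⟩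
    simpa using ha) (Submodule.factor_surjective hPa) (by
    intro y
    obtain ⟨y, rfl⟩ := Submodule.Quotient.mk_surjective _ y
    constructor
    · intro h
      have h' : y ∈ 𝔞 := (Submodule.Quotient.mk_eq_zero _).1 h
      obtain ⟨a, rfl⟩ := h'
      exact ⟨Submodule.Quotient.mk a, rfl⟩
    · rintro ⟨x, hx⟩
      obtain ⟨x, rfl⟩ := Submodule.Quotient.mk_surjective _ x
      rw [← hx]
      exact (Submodule.Quotient.mk_eq_zero _).2 ⟨x, rfl⟩)
  let f2 : (D ⧸ 𝔞) →ₗ[D] D ⧸ P := Submodule.mapQ _ _ (LinearMap.lsmul D D d) (by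
    intro a ha
    exact ⟨a, ha, rfl⟩)
  let g2 : (D ⧸ P) →ₗ[D] D ⧸ Ideal.span {d} := Submodule.factor hPd
  have e2 := Module.length_eq_add_of_exact f2 g2 (by
    rw [injective_iff_map_eq_zero]
    intro x hx
    obtain ⟨x, rfl⟩ := Submodule.Quotient.mk_surjective _ x
    replace hx : (Submodule.Quotient.mk (d * x) : D ⧸ P) = 0 := hx
    rw [Submodule.Quotient.mk_eq_zero] at hx
    obtain ⟨a, ha, hax⟩ := hx
    rw [Submodule.Quotient.mk_eq_zero]
    have : a = x := mul_left_cancel₀ hd hax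
    exact this ▸ ha) (Submodule.factor_surjective hPd) (by
    intro y
    obtain ⟨y, rfl⟩ := Submodule.Quotient.mk_surjective _ y
    constructor
    · intro h
      have h' : y ∈ Ideal.span {d} := (Submodule.Quotient.mk_eq_zero _).1 h
      obtain ⟨a, rfl⟩ := Ideal.mem_span_singleton'.1 h'
      exact ⟨Submodule.Quotient.mk a, by rw [mul_comm]; rfl⟩
    · rintro ⟨x, hx⟩
      obtain ⟨x, rfl⟩ := Submodule.Quotient.mk_surjective _ x
      rw [← hx]
      exact (Submodule.Quotient.mk_eq_zero _).2 (Ideal.mem_span_singleton'.2 ⟨x, mul_comm _ _⟩))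
  rw [e1, add_comm] at e2
  exact (WithTop.add_left_cancel hfin e2).le

/-- strict chains of divisors in a ring `V` between `D` and its fraction field. -/
lemma chain_bound {V : Type*} [CommRing V] [Algebra D V]
    (hinj : Function.Injective (algebraMap D V)) [IsDomain V]
    (hfrac : ∀ v : V, ∃ c : D, c ≠ 0 ∧ ∃ a : D, algebraMap D V a = algebraMap D V c * v)
    (d : D) (hd : d ≠ 0) 
    (hart : ∀ I : Ideal D, I ≠ ⊥ → Module.length D (D ⧸ I) ≠ ⊤) (n : ℕ) (x : ℕ → V)
    (hx0 : x 0 = algebraMap D V d)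
    (hx : ∀ i < n, x (i+1) ∣ x i ∧ ¬ x i ∣ x (i+1)) :
    (n : ℕ∞) ≤ Module.length D (D ⧸ Ideal.span {d}) := by
  classical
  let N : Submodule D V := Submodule.span D (x '' (Finset.range (n+1) : Set ℕ) ∪ {1})
  have h1N : (1 : V) ∈ N := Submodule.subset_span (Or.inr rfl)
  have hdvd : ∀ i ≤ n, x i ∣ x 0 := by
    intro i hi
    induction i with
    | zero => rfl
    | succ i ih => exact (hx i (by omega)).1.trans (ih (by omega))
  obtain ⟨c, hc0, hc⟩ : ∃ c : D, c ≠ 0 ∧ ∀ v ∈ N, ∃ a : D,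
      algebraMap D V a = algebraMap D V c * v := by
    choose c hc a ha using hfrac
    refine ⟨∏ i ∈ Finset.range (n+1), c (x i),
      Finset.prod_ne_zero_iff.2 fun i _ => hc _, fun v hv => ?_⟩
    induction hv using Submodule.span_induction with
    | zero => exact ⟨0, by simp⟩
    | add u v _ _ hu hv =>
      obtain ⟨a, ha⟩ := hu
      obtain ⟨b, hb⟩ := hv
      exact ⟨a + b, by rw [map_add, ha, hb, mul_add]⟩
    | smul r u _ hu =>
      obtain ⟨a, ha⟩ := hu
      exact ⟨r * a, by rw [map_mul, ha, Algebra.smul_def]; ring⟩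
    | mem u hu =>
      rcases hu with ⟨i, hi, rfl⟩ | rfl
      · have hi' : i ∈ Finset.range (n+1) := by simpa using hi
        refine ⟨(∏ j ∈ (Finset.range (n+1)).erase i, c (x j)) * a (x i), ?_⟩
        rw [map_mul, ha, ← Finset.prod_erase_mul _ _ hi', map_mul]; ring
      · exact ⟨∏ i ∈ Finset.range (n+1), c (x i), by simp⟩
  choose j hj using fun v : N => hc v.1 v.2
  let J : N →ₗ[D] D :=
    { toFun := j
      map_add' := fun u v => hinj (by rw [map_add, hj, hj, hj]; simp [mul_add])
      map_smul' := fun r u => hinj (by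
        rw [hj]
        simp only [RingHom.id_apply, smul_eq_mul, map_mul, hj, Submodule.coe_smul,
          Algebra.smul_def]
        ring) }
  have hJ : Function.Injective J := by
    intro u v huv
    have : algebraMap D V (j u) = algebraMap D V (j v) := congrArg _ huv
    rw [hj, hj] at this
    exact Subtype.ext (mul_left_cancel₀ (fun h => hc0 (hinj (by rw [h, map_zero]))) this)
  have hrange : (LinearMap.range J : Submodule D D) ≠ ⊥ := by
    intro h
    rw [LinearMap.range_eq_bot] at h
    have h1 : J ⟨1, h1N⟩ = J 0 := by rw [h]; rfl
    have := congrArg Subtype.val (hJ h1)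
    simp at this
  refine le_trans ?_ (length_quot_le J hJ d hd (hart _ hrange))
  let W : Submodule D N := Submodule.map (LinearMap.lsmul D N d) ⊤
  let Ni : ℕ → Submodule D N := fun i =>
    Submodule.comap N.subtype ((Ideal.span {x i} : Ideal V).restrictScalars D)
  have hNi : ∀ i (y : N), y ∈ Ni i ↔ x i ∣ (y : V) := fun i y => by
    simp only [Ni, Submodule.mem_comap, Submodule.restrictScalars_mem]
    exact Ideal.mem_span_singleton
  have hW : ∀ i ≤ n, W ≤ Ni i := by
    rintro i hi _ ⟨y, -, rfl⟩
    rw [hNi]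
    refine (hdvd i hi).trans ?_
    simp only [LinearMap.lsmul_apply, Submodule.coe_smul, hx0, Algebra.smul_def]
    exact dvd_mul_right _ _
  have hlt : ∀ i < n, Submodule.map W.mkQ (Ni i) < Submodule.map W.mkQ (Ni (i+1)) := by
    intro i hi
    obtain ⟨h1, h2⟩ := hx i hi
    refine lt_of_le_of_ne (Submodule.map_mono fun y hy => ?_) fun heq => ?_
    · rw [hNi] at hy ⊢; exact h1.trans hy
    · have hmem : x (i+1) ∈ N := Submodule.subset_span (Or.inl ⟨i+1, by simpa using hi, rfl⟩)
      have h3 : W.mkQ ⟨x (i+1), hmem⟩ ∈ Submodule.map W.mkQ (Ni (i+1)) :=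
        ⟨_, by rw [SetLike.mem_coe, hNi], rfl⟩
      rw [← heq] at h3
      obtain ⟨y, hy, hyx⟩ := h3
      have h4 : y - ⟨x (i+1), hmem⟩ ∈ W := (Submodule.Quotient.eq _).1 hyx
      have h5 := hW i hi.le h4
      have h6 := (Ni i).sub_mem hy h5
      rw [sub_sub_cancel, hNi] at h6
      exact h2 h6
  let s : LTSeries (Submodule D (N ⧸ W)) :=
    { length := n
      toFun := fun i => Submodule.map W.mkQ (Ni i)
      step := fun i => by
        have := hlt i i.2
        simpa using this }
  have := Order.LTSeries.length_le_krullDim s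
  rw [← Module.coe_length] at this
  exact_mod_cast this
end



/-- existence of an arc -/
def HasArc (R : Type u) [CommRing R] [IsLocalRing R] (d : R) : Prop :=
  ∃ (V : Type u) (_ : CommRing V) (_ : IsDomain V) (t : V) (π : R →+* V),
    t ≠ 0 ∧ (Ideal.span {t}).IsMaximal ∧ (∀ x : V, x ≠ 0 → ∃ n : ℕ, ¬ t ^ n ∣ x) ∧
    (∀ y ∈ IsLocalRing.maximalIdeal R, t ∣ π y) ∧ π d ≠ 0

lemma hasArc_dim1 (D : Type u) [CommRing D] [IsDomain D] [IsNoetherianRing D] [IsLocalRing D]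
    (d : D) (hd0 : d ≠ 0) (hdm : d ∈ IsLocalRing.maximalIdeal D)
    (hd : ∀ p : Ideal D, p.IsPrime → p ≠ ⊥ → d ∈ p) : HasArc D d := by
  obtain ⟨V, h, hloc⟩ := IsLocalRing.exists_factor_valuationRing (algebraMap D (FractionRing D))
  let π : D →+* V := (algebraMap D (FractionRing D)).codRestrict V.toSubring h
  letI : Algebra D V := π.toAlgebra
  have hπ : ∀ x, ((algebraMap D V x : V) : FractionRing D) = algebraMap D (FractionRing D) x :=
    fun x => rfl
  have hinj : Function.Injective (algebraMap D V) := by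
    intro x y hxy
    apply IsFractionRing.injective D (FractionRing D)
    rw [← hπ, ← hπ, hxy]
  have hloc' : ∀ y ∈ IsLocalRing.maximalIdeal D, ¬ IsUnit (algebraMap D V y) := by
    intro y hy hu
    exact hy (hloc.map_nonunit y hu)
  have hfrac : ∀ v : V, ∃ c : D, c ≠ 0 ∧ ∃ a : D, algebraMap D V a = algebraMap D V c * v := by
    intro v
    obtain ⟨a, c, hc, hv⟩ := IsFractionRing.div_surjective (A := D) (v : FractionRing D)
    have hc0 := nonZeroDivisors.ne_zero hc
    refine ⟨c, hc0, a, ?_⟩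
    apply Subtype.ext
    have hc1 : algebraMap D (FractionRing D) c ≠ 0 := fun h =>
      hc0 (IsFractionRing.injective D (FractionRing D) (by rw [h, map_zero]))
    rw [hπ]
    show _ = algebraMap D (FractionRing D) c * (v : FractionRing D)
    rw [← hv]; field_simp
  have hart : ∀ I : Ideal D, I ≠ ⊥ → Module.length D (D ⧸ I) ≠ ⊤ := by
    intro I hI
    by_cases hIt : I = ⊤
    · subst hIt
      have : Subsingleton (D ⧸ (⊤ : Ideal D)) := Ideal.Quotient.subsingleton_iff.2 rfl
      rw [Module.length_eq_zero]; simp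
    have := IsLocalRing.quotient_artinian_of_mem_minimalPrimes_of_isLocalRing I
      (max_mem_minimalPrimes d hd0 hd hdm I hI (IsLocalRing.le_maximalIdeal hIt))
    rw [Module.length_eq_of_surjective (S := D) (R := D ⧸ I) (M := D ⧸ I)
      Ideal.Quotient.mk_surjective]
    exact Module.length_ne_top
  obtain ⟨ℓ, hℓ⟩ := ENat.ne_top_iff_exists.1 (hart (Ideal.span {d}) (by simpa using hd0))
  have bound : ∀ (n : ℕ) (x : ℕ → V), x 0 = algebraMap D V d →
      (∀ i < n, x (i+1) ∣ x i ∧ ¬ x i ∣ x (i+1)) → n ≤ ℓ := by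
    intro n x hx0 hx
    have := chain_bound hinj hfrac d hd0 hart n x hx0 hx
    rw [← hℓ] at this
    exact_mod_cast this
  have htot : ∀ x y : V, x ∣ y ∨ y ∣ x := fun x y => ValuationRing.dvd_total x y
  have hdV : algebraMap D V d ≠ 0 := fun h => hd0 (hinj (by rw [h, map_zero]))
  obtain ⟨t, htu, ht⟩ : ∃ t : V, ¬ IsUnit t ∧ ∀ y : V, ¬ IsUnit y → t ∣ y := by
    by_contra! hcon
    choose! nx hnx1 hnx2 using hcon
    let x : ℕ → V := fun i => nx^[i] (algebraMap D V d)
    have hxu : ∀ i, ¬ IsUnit (x i) := by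
      intro i
      induction i with
      | zero => exact hloc' d hdm
      | succ i ih => simp only [x, Function.iterate_succ_apply'] at ih ⊢; exact hnx1 _ ih
    have := bound (ℓ+1) x rfl (fun i _ => by
      have e : x (i+1) = nx (x i) := by simp only [x, Function.iterate_succ_apply']
      have h2 := hnx2 _ (hxu i)
      rw [e]
      exact ⟨(htot _ _).resolve_left h2, h2⟩)
    omega
  have ht0 : t ≠ 0 := by
    rintro rfl
    exact hdV (zero_dvd_iff.1 (ht _ (hloc' d hdm)))
  have hpw : ¬ t ^ (ℓ+1) ∣ algebraMap D V d := by
    intro hdiv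
    let x : ℕ → V := fun i => if i = 0 then algebraMap D V d else t ^ (ℓ + 1 - i)
    have strict : ∀ m : ℕ, ¬ t ^ (m+1) ∣ t ^ m := by
      rintro m ⟨c, hc⟩
      apply htu
      rw [pow_succ, mul_assoc] at hc
      exact IsUnit.of_mul_eq_one c
        (mul_left_cancel₀ (pow_ne_zero m ht0) (by rw [← hc, mul_one]))
    have := bound (ℓ+1) x (by simp [x]) (fun i hi => by
      rcases Nat.eq_zero_or_pos i with rfl | hpos
      · simp only [x, if_true, zero_add, one_ne_zero, if_false]
        refine ⟨(pow_dvd_pow t (by omega)).trans hdiv, fun h => ?_⟩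
        apply strict ℓ
        have := hdiv.trans h
        simpa using this
      · have h1 : x i = t ^ (ℓ - i + 1) := by
          simp only [x, if_neg hpos.ne']; congr 1; omega
        have h2 : x (i+1) = t ^ (ℓ - i) := by
          simp only [x, if_neg (Nat.succ_ne_zero i)]; congr 1; omega
        rw [h1, h2]
        exact ⟨pow_dvd_pow t (by omega), strict _⟩)
    omega
  have hdt : algebraMap D V d ∣ t ^ (ℓ+1) := (htot _ _).resolve_right hpw
  refine ⟨V, inferInstance, inferInstance, t, π, ht0, ?_, ?_, ?_, hdV⟩
  · have : Ideal.span {t} = IsLocalRing.maximalIdeal V := by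
      ext y
      rw [Ideal.mem_span_singleton, IsLocalRing.mem_maximalIdeal, mem_nonunits_iff]
      constructor
      · intro h hu
        exact htu (isUnit_of_dvd_unit h hu)
      · exact ht y
    rw [this]; infer_instance
  · intro x hx
    by_contra! hall
    obtain ⟨c, hc0, a, hca⟩ : ∃ b : D, b ≠ 0 ∧ ∃ a : V, algebraMap D V b = x * a := by
      obtain ⟨c, hc, a, ha⟩ := hfrac x
      refine ⟨a, ?_, algebraMap D V c, by rw [ha, mul_comm]⟩
      rintro rfl
      rw [map_zero] at ha
      rcases mul_eq_zero.1 ha.symm with h | h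
      · exact hc (hinj (by rw [h, map_zero]))
      · exact hx h
    have hrad : d ∈ (Ideal.span {c}).radical := by
      rw [Ideal.radical_eq_sInf, Submodule.mem_sInf]
      rintro P ⟨hP1, hP2⟩
      exact hd P hP2 (by
        rintro rfl
        exact hc0 (hP1 (Ideal.mem_span_singleton_self c)))
    obtain ⟨n, hn⟩ := hrad
    obtain ⟨e, he⟩ := Ideal.mem_span_singleton'.1 hn
    have h1 : x ∣ algebraMap D V d ^ n := by
      rw [← map_pow, ← he, map_mul, hca]
      exact (dvd_mul_right x a).mul_left _
    have h2 : algebraMap D V d ^ (n+1) ∣ x := by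
      refine dvd_trans ?_ (hall ((ℓ+1) * (n+1)))
      rw [pow_mul]
      exact pow_dvd_pow_of_dvd hdt _
    obtain ⟨w, hw⟩ := h2.trans h1
    apply hloc' d hdm
    rw [pow_succ, mul_assoc] at hw
    exact IsUnit.of_mul_eq_one w
        (mul_left_cancel₀ (pow_ne_zero n hdV) (by rw [← hw, mul_one]))
  · intro y hy
    exact ht _ (hloc' y hy)

lemma hasArc_of_field (R : Type u) [CommRing R] [IsDomain R] [IsLocalRing R]
    (hR : IsField R) (d : R) (hd : d ≠ 0) : HasArc R d := by
  have hm : IsLocalRing.maximalIdeal R = ⊥ := IsLocalRing.isField_iff_maximalIdeal_eq.1 hR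
  letI := hR.toField
  refine ⟨PowerSeries R, inferInstance, inferInstance, PowerSeries.X, PowerSeries.C,
    PowerSeries.X_ne_zero, ?_, ?_, ?_, ?_⟩
  · have : Ideal.span {(PowerSeries.X : PowerSeries R)} =
      RingHom.ker (PowerSeries.constantCoeff (R := R)) := by
      ext y
      rw [Ideal.mem_span_singleton, RingHom.mem_ker, PowerSeries.X_dvd_iff]
    rw [this]
    exact RingHom.ker_isMaximal_of_surjective _ PowerSeries.constantCoeff_surj
  · intro x hx
    obtain ⟨n, hn⟩ := PowerSeries.exists_coeff_ne_zero_iff_ne_zero.2 hx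
    refine ⟨n+1, fun h => hn (PowerSeries.X_pow_dvd_iff.1 h n (by omega))⟩
  · intro y hy
    rw [hm] at hy
    rw [show y = 0 from hy, map_zero]
    exact dvd_zero _
  · intro h
    exact hd (PowerSeries.C_injective (by rw [h, map_zero]))

lemma hasArc (R : Type u) [CommRing R] [IsDomain R] [IsNoetherianRing R] [IsLocalRing R]
    (d : R) (hd : d ≠ 0) : HasArc R d := by
  by_cases hR : IsField R
  · exact hasArc_of_field R hR d hd
  obtain ⟨x, hxm, hx0⟩ : ∃ x ∈ IsLocalRing.maximalIdeal R, x ≠ 0 := by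
    by_contra! h
    exact hR (IsLocalRing.isField_iff_maximalIdeal_eq.2 (le_bot_iff.1 fun y hy => h y hy))
  suffices HasArc R (d * x) by
    obtain ⟨V, i1, i2, t, π, h1, h2, h3, h4, h5⟩ := this
    refine ⟨V, i1, i2, t, π, h1, h2, h3, h4, fun h => h5 (by rw [map_mul, h, zero_mul])⟩
  have he0 : d * x ≠ 0 := mul_ne_zero hd hx0
  have hem : d * x ∈ IsLocalRing.maximalIdeal R := Ideal.mul_mem_left _ _ hxm
  generalize d * x = e at he0 hem
  have hbot : Disjoint ((⊥ : Ideal R) : Set R) (Submonoid.powers e : Set R) := by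
    rw [Set.disjoint_left]
    rintro _ h ⟨n, rfl⟩
    exact pow_ne_zero n he0 h
  obtain ⟨p, hp⟩ : ∃ p : Ideal R, Maximal (fun q : Ideal R => q.IsPrime ∧ e ∉ q) p := by
    have := set_has_maximal_iff_noetherian.2 (inferInstanceAs (IsNoetherian R R))
      {q : Ideal R | q.IsPrime ∧ e ∉ q} ⟨⊥, Ideal.isPrime_bot, he0⟩
    obtain ⟨p, hp, hmax⟩ := this
    refine ⟨p, hp, fun q hq hle => ?_⟩
    by_contra hn
    exact hmax q hq (lt_of_le_not_ge hle hn)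
  have hpp : p.IsPrime := hp.prop.1
  have hep : e ∉ p := hp.prop.2
  let D := R ⧸ p
  have : IsLocalRing D := IsLocalRing.of_surjective' (Ideal.Quotient.mk p)
    Ideal.Quotient.mk_surjective
  have hloc : IsLocalHom (Ideal.Quotient.mk p) :=
    IsLocalHom.of_surjective _ Ideal.Quotient.mk_surjective
  have hmm : ∀ y ∈ IsLocalRing.maximalIdeal R,
      Ideal.Quotient.mk p y ∈ IsLocalRing.maximalIdeal D := by
    intro y hy hu
    exact hy (hloc.map_nonunit y hu)
  obtain ⟨V, i1, i2, t, π, h1, h2, h3, h4, h5⟩ := hasArc_dim1 D (Ideal.Quotient.mk p e)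
    (by rwa [Ne, Ideal.Quotient.eq_zero_iff_mem]) (hmm e hem) (by
      intro P hP hP0
      by_contra hn
      apply hP0
      have h1 : p ≤ P.comap (Ideal.Quotient.mk p) := by
        intro y hy
        rw [Ideal.mem_comap, Ideal.Quotient.eq_zero_iff_mem.2 hy]
        exact P.zero_mem
      have h2 := hp.le_of_ge (y := P.comap (Ideal.Quotient.mk p)) ⟨hP.comap _, hn⟩ h1
      rw [eq_bot_iff]
      intro y hy
      obtain ⟨y, rfl⟩ := Ideal.Quotient.mk_surjective y
      exact Ideal.Quotient.eq_zero_iff_mem.2 (h2 hy))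
  exact ⟨V, i1, i2, t, π.comp (Ideal.Quotient.mk p), h1, h2, h3,
    fun y hy => h4 _ (hmm y hy), h5⟩



section
variable {k S : Type*} {R : Type u} [Field k] [CommRing S] [Algebra k S]
  [CommRing R] [Algebra k R]

lemma exists_slice_limit (J : Ideal S) (m : Ideal R) [IsAdicComplete m R]
    (f : ℕ → S ⊗[k] R)
    (hf : ∀ n, f (n+1) - f n ∈ tf k (J ^ n) (m ^ n))
    (h0 : ¬ ∀ n, f n ∈ tf k (J ^ n) (m ^ n)) :
    ∃ (φ : S →ₗ[k] k) (n₀ : ℕ) (d : R), (∀ x ∈ J ^ n₀, φ x = 0) ∧ d ≠ 0 ∧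
      ∀ n, slice R φ (f (n + n₀)) - d ∈ m ^ n := by
  push Not at h0
  obtain ⟨n₀, hn⟩ := h0
  rw [mem_tf_iff] at hn
  push Not at hn
  obtain ⟨φ, hφ, hs⟩ := hn
  obtain ⟨d, hd⟩ := exists_lim m (fun n => slice R φ (f (n + n₀))) (fun n => by
    have h1 := (mem_tf_iff _ _ _).1 (hf (n + n₀)) φ
      (fun x hx => hφ x (Ideal.pow_le_pow_right (by omega) hx))
    rw [map_sub, add_right_comm] at h1
    exact Ideal.pow_le_pow_right (by omega) h1)
  refine ⟨φ, n₀, d, hφ, ?_, hd⟩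
  rintro rfl
  apply hs
  have h1 := hd n₀
  rw [sub_zero] at h1
  have h2 := cauchy_le _ (tf_antitone J m) f hf (show n₀ ≤ n₀ + n₀ by omega)
  have h3 := (mem_tf_iff _ _ _).1 h2 φ hφ
  rw [map_sub] at h3
  have := Ideal.sub_mem _ h1 h3
  simpa using this

theorem CDom_arcs [IsDomain R] [IsNoetherianRing R] [IsLocalRing R]
    [IsAdicComplete (IsLocalRing.maximalIdeal R) R] (J : Ideal S)
    (H : ∀ (κ : Type u) [CommRing κ] [Algebra k κ], IsField κ →
      CDom (fun n => tf k (J ^ n) (⊥ : Ideal κ))) :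
    CDom (fun n => tf k (J ^ n) (IsLocalRing.maximalIdeal R ^ n)) := by
  intro f g hf hg hfg
  by_contra! hcon
  obtain ⟨φ, n₁, d, hφ, hd0, hd⟩ := exists_slice_limit J _ f hf (by push Not; exact hcon.1)
  obtain ⟨ψ, n₂, e, hψ, he0, he⟩ := exists_slice_limit J _ g hg (by push Not; exact hcon.2)
  obtain ⟨V, i1, i2, t, π, ht0, htm, hsep, hm, hπ⟩ := hasArc R (d * e) (mul_ne_zero hd0 he0)
  let iV : Algebra k V := (π.comp (algebraMap k R)).toAlgebra
  let π' : R →ₐ[k] V := { π with commutes' := fun _ => rfl }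
  have hπm : ∀ n, IsLocalRing.maximalIdeal R ^ n ≤ Ideal.comap π' (Ideal.span {t} ^ n) := by
    intro n
    have h1 : IsLocalRing.maximalIdeal R ≤ Ideal.comap π' (Ideal.span {t}) := by
      intro y hy
      rw [Ideal.mem_comap, Ideal.mem_span_singleton]
      exact hm y hy
    exact (Ideal.pow_right_mono h1 n).trans (Ideal.le_comap_pow _ n)
  let Φ := Algebra.TensorProduct.map (AlgHom.id k S) π'
  have hΦ : ∀ n z, z ∈ tf k (J ^ n) (IsLocalRing.maximalIdeal R ^ n) →
      Φ z ∈ tf k (J ^ n) (Ideal.span {t} ^ n) := by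
    intro n z hz
    rw [map_mem_tf_iff]
    exact tf_mono le_rfl (hπm n) hz
  have hC := CDom_leading (k := k) t ht0 J (H _ ((Ideal.Quotient.maximal_ideal_iff_isField_quotient
    _).1 htm))
  have key : ∀ (f : ℕ → S ⊗[k] R) (φ : S →ₗ[k] k) (n₁ : ℕ) (d : R),
      (∀ x ∈ J ^ n₁, φ x = 0) →
      (∀ n, slice R φ (f (n + n₁)) - d ∈ IsLocalRing.maximalIdeal R ^ n) →
      (∀ n, Φ (f n) ∈ tf k (J ^ n) (Ideal.span {t} ^ n)) → π d = 0 := by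
    intro f φ n₁ d hφ hd hz
    by_contra hne
    obtain ⟨n, hn⟩ := hsep _ hne
    apply hn
    have h1 := (mem_tf_iff _ _ _).1 (hz (n + n₁)) φ
      (fun x hx => hφ x (Ideal.pow_le_pow_right (by omega) hx))
    rw [slice_map] at h1
    have h2 := Ideal.pow_le_pow_right (show n ≤ n + n₁ by omega) h1
    have h3 := hπm n (hd n)
    rw [Ideal.mem_comap, map_sub] at h3
    have h4 := Ideal.sub_mem _ h2 h3
    rw [sub_sub_cancel, Ideal.span_singleton_pow, Ideal.mem_span_singleton] at h4
    exact h4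
  rw [map_mul] at hπ
  rcases hC (fun n => Φ (f n)) (fun n => Φ (g n))
    (fun n => by rw [← map_sub]; exact hΦ _ _ (hf n))
    (fun n => by rw [← map_sub]; exact hΦ _ _ (hg n))
    (fun n => by rw [← map_mul]; exact hΦ _ _ (hfg n)) with h | h
  · exact hπ (by rw [key f φ n₁ d hφ hd h, zero_mul])
  · exact hπ (by rw [key g ψ n₂ e hψ he h, mul_zero])
end


lemma exists_fg_sub {k S R : Type*} [Field k] [CommRing S] [CommRing R] [Algebra k S] [Algebra k R]
    (z : S ⊗[k] R) : ∃ A : Subalgebra k R, A.FG ∧ ∀ A' : Subalgebra k R, A ≤ A' →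
      ∃ w : S ⊗[k] A', Algebra.TensorProduct.map (AlgHom.id k S) A'.val w = z := by
  induction z with
  | zero => exact ⟨⊥, Subalgebra.fg_bot, fun A' _ => ⟨0, map_zero _⟩⟩
  | add x y hx hy =>
    obtain ⟨A, hA, h1⟩ := hx
    obtain ⟨B, hB, h2⟩ := hy
    refine ⟨A ⊔ B, hA.sup hB, fun A' h => ?_⟩
    obtain ⟨w1, e1⟩ := h1 A' (le_sup_left.trans h)
    obtain ⟨w2, e2⟩ := h2 A' (le_sup_right.trans h)
    exact ⟨w1 + w2, by rw [map_add, e1, e2]⟩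
  | tmul x y =>
    refine ⟨Algebra.adjoin k {y}, ⟨{y}, by simp⟩, fun A' h => ?_⟩
    exact ⟨x ⊗ₜ ⟨y, h (Algebra.subset_adjoin rfl)⟩, by simp⟩

lemma tf_bot_bot {k S R : Type*} [Field k] [CommRing S] [CommRing R] [Algebra k S] [Algebra k R] :
    tf k (⊥ : Ideal S) (⊥ : Ideal R) = ⊥ := by
  simp [tf, Ideal.map_bot]

lemma exists_point {k A : Type*} [Field k] [IsAlgClosed k] [CommRing A] [IsDomain A] [Algebra k A]
    [Algebra.FiniteType k A] (a : A) (ha : a ≠ 0) : ∃ χ : A →ₐ[k] k, χ a ≠ 0 := by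
  have : IsJacobsonRing A := isJacobsonRing_of_finiteType (A := k)
  have h0 : (⊥ : Ideal A).jacobson = ⊥ := by
    exact IsJacobsonRing.out this (Ideal.isPrime_bot (α := A)).isRadical
  have h1 : a ∉ (⊥ : Ideal A).jacobson := by rw [h0]; exact ha
  rw [Ideal.jacobson, Ideal.mem_sInf] at h1
  push Not at h1
  obtain ⟨M, ⟨_, hM⟩, haM⟩ := h1
  letI := Ideal.Quotient.field M
  have : Module.Finite k (A ⧸ M) := finite_of_finite_type_of_isJacobsonRing k (A ⧸ M)
  have hb : Function.Bijective (algebraMap k (A ⧸ M)) :=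
    IsAlgClosed.algebraMap_bijective_of_isIntegral
  let e : k ≃ₐ[k] (A ⧸ M) := AlgEquiv.ofBijective (Algebra.ofId k (A ⧸ M)) hb
  refine ⟨(e.symm : (A ⧸ M) →ₐ[k] k).comp (Ideal.Quotient.mkₐ k M), ?_⟩
  intro h
  apply haM
  rw [← Ideal.Quotient.eq_zero_iff_mem]
  simpa using h

theorem tensor_noZeroDiv {k S R : Type*} [Field k] [IsAlgClosed k] [CommRing S] [CommRing R]
    [IsDomain S] [IsDomain R] [Algebra k S] [Algebra k R] (x y : S ⊗[k] R) (h : x * y = 0) :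
    x = 0 ∨ y = 0 := by
  by_contra! hne
  obtain ⟨A1, hA1, h1⟩ := exists_fg_sub x
  obtain ⟨A2, hA2, h2⟩ := exists_fg_sub y
  let A := A1 ⊔ A2
  obtain ⟨x', rfl⟩ := h1 A le_sup_left
  obtain ⟨y', rfl⟩ := h2 A le_sup_right
  have hfg : Algebra.FiniteType k A := A.fg_iff_finiteType.1 (hA1.sup hA2)
  have hinj : Function.Injective (Algebra.TensorProduct.map (AlgHom.id k S) A.val) := by
    have := Module.Flat.lTensor_preserves_injective_linearMap (R := k) (M := S)
      A.val.toLinearMap Subtype.val_injective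
    exact this
  have hx' : x' ≠ 0 := fun h => hne.1 (by rw [h, map_zero])
  have hy' : y' ≠ 0 := fun h => hne.2 (by rw [h, map_zero])
  have hxy : x' * y' = 0 := hinj (by rw [map_mul, h, map_zero])
  have key : ∀ z : S ⊗[k] A, z ≠ 0 → ∃ φ : S →ₗ[k] k, slice A φ z ≠ 0 := by
    intro z hz
    by_contra! hc
    apply hz
    rw [← Ideal.mem_bot, ← tf_bot_bot, mem_tf_iff]
    exact fun φ _ => hc φ
  obtain ⟨φ, hφ⟩ := key x' hx'
  obtain ⟨ψ, hψ⟩ := key y' hy'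
  obtain ⟨χ, hχ⟩ := exists_point (k := k) _ (mul_ne_zero hφ hψ)
  rw [map_mul] at hχ
  have e := congrArg (Algebra.TensorProduct.rid k k S)
    (congrArg (Algebra.TensorProduct.map (AlgHom.id k S) χ) hxy)
  simp only [map_mul, map_zero, mul_eq_zero] at e
  rcases e with e | e
  · rw [EmbeddingLike.map_eq_zero_iff] at e
    apply left_ne_zero_of_mul hχ
    rw [← slice_map, e, map_zero]
  · rw [EmbeddingLike.map_eq_zero_iff] at e
    apply right_ne_zero_of_mul hχ
    rw [← slice_map, e, map_zero]



lemma tf_comm_mem {k S R : Type*} [Field k] [CommRing S] [CommRing R] [Algebra k S] [Algebra k R]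
    (I : Ideal S) (K : Ideal R) (z : S ⊗[k] R) (hz : z ∈ tf k I K) :
    Algebra.TensorProduct.comm k S R z ∈ tf k K I := by
  have h : tf k I K ≤ (tf k K I).comap (Algebra.TensorProduct.comm k S R) := by
    refine sup_le (Ideal.map_le_iff_le_comap.2 ?_) (Ideal.map_le_iff_le_comap.2 ?_)
    · intro x hx
      have : (1 : R) ⊗ₜ[k] x ∈ tf k K I := Ideal.mem_sup_right (Ideal.mem_map_of_mem
        (Algebra.TensorProduct.includeRight (R := k) (A := R) (B := S)) hx)
      simpa [Ideal.mem_comap] using this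
    · intro x hx
      have : x ⊗ₜ[k] (1 : S) ∈ tf k K I := Ideal.mem_sup_left (Ideal.mem_map_of_mem
        (Algebra.TensorProduct.includeLeft (R := k) (S := k) (A := R) (B := S)) hx)
      simpa [Ideal.mem_comap] using this
  exact h hz

lemma tf_comm {k S R : Type*} [Field k] [CommRing S] [CommRing R] [Algebra k S] [Algebra k R]
    (I : Ideal S) (K : Ideal R) (z : S ⊗[k] R) :
    Algebra.TensorProduct.comm k S R z ∈ tf k K I ↔ z ∈ tf k I K := by
  refine ⟨fun h => ?_, tf_comm_mem I K z⟩
  have := tf_comm_mem K I _ h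
  rwa [← Algebra.TensorProduct.comm_symm, AlgEquiv.symm_apply_apply] at this

lemma tf_left_top {k S R : Type*} [Field k] [CommRing S] [CommRing R] [Algebra k S] [Algebra k R]
    (K : Ideal R) : tf k (⊤ : Ideal S) K = ⊤ := by
  rw [tf, Ideal.map_top, top_sup_eq]

lemma tf_right_top {k S R : Type*} [Field k] [CommRing S] [CommRing R] [Algebra k S] [Algebra k R]
    (K : Ideal S) : tf k K (⊤ : Ideal R) = ⊤ := by
  rw [tf, Ideal.map_top, sup_top_eq]

lemma CDom_fields {k S R : Type*} [Field k] [IsAlgClosed k] [CommRing S] [CommRing R]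
    [IsDomain S] [IsDomain R] [Algebra k S] [Algebra k R] :
    CDom (fun n => tf k ((⊥ : Ideal S) ^ n) (⊥ : Ideal R)) := by
  have h0 : tf k ((⊥ : Ideal S) ^ 0) (⊥ : Ideal R) = ⊤ := by
    rw [pow_zero, Ideal.one_eq_top, tf_left_top]
  have h1 : ∀ n, tf k ((⊥ : Ideal S) ^ (n + 1)) (⊥ : Ideal R) = ⊥ := by
    intro n
    rw [Ideal.bot_pow (by omega), tf_bot_bot]
  have aux : ∀ f : ℕ → S ⊗[k] R, (∀ n, f (n+1) - f n ∈ tf k ((⊥ : Ideal S) ^ n) (⊥ : Ideal R)) →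
      f 1 = 0 → ∀ n, f n ∈ tf k ((⊥ : Ideal S) ^ n) (⊥ : Ideal R) := by
    intro f hf h n
    cases n with
    | zero => rw [h0]; trivial
    | succ n =>
      rw [h1, Ideal.mem_bot]
      induction n with
      | zero => exact h
      | succ n ih =>
        have := hf (n + 1)
        rwa [h1, Ideal.mem_bot, ih, sub_zero] at this
  intro f g hf hg hfg
  have := hfg 1
  dsimp only at this
  rw [h1 0, Ideal.mem_bot] at this
  rcases tensor_noZeroDiv _ _ this with h | h
  · exact Or.inl (aux f hf h)
  · exact Or.inr (aux g hg h)

theorem CDom_complete {k : Type*} {S : Type v} {R : Type u} [Field k] [IsAlgClosed k]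
    [CommRing S] [CommRing R] [IsDomain S] [IsDomain R] [Algebra k S] [Algebra k R]
    [IsNoetherianRing S] [IsNoetherianRing R] [IsLocalRing S] [IsLocalRing R]
    [IsAdicComplete (IsLocalRing.maximalIdeal S) S]
    [IsAdicComplete (IsLocalRing.maximalIdeal R) R] :
    CDom (fun n => tf k (IsLocalRing.maximalIdeal S ^ n) (IsLocalRing.maximalIdeal R ^ n)) := by
  apply CDom_arcs
  intro κ _ _ hκ
  have : IsDomain κ := hκ.isDomain
  apply CDom.transfer (Algebra.TensorProduct.comm k S κ : S ⊗[k] κ →+* κ ⊗[k] S) _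
    (fun n => tf k ((⊥ : Ideal κ) ^ n) (IsLocalRing.maximalIdeal S ^ n))
  · intro n z
    cases n with
    | zero => simp [tf_left_top]
    | succ n =>
      rw [Ideal.bot_pow (by omega)]
      exact tf_comm _ _ _
  · apply CDom_arcs
    intro κ' _ _ hκ'
    have : IsDomain κ' := hκ'.isDomain
    exact CDom_fields


lemma irreducible_map_of_algClosedIn {k F : Type*} [Field k] [Field F] [Algebra k F]
    (hF : ∀ x : F, IsAlgebraic k x → x ∈ (algebraMap k F).range) (p : Polynomial k)
    (hp : Irreducible p) (hm : p.Monic) : Irreducible (p.map (algebraMap k F)) := by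
  have hne : p.map (algebraMap k F) ≠ 1 := by
    intro h
    have : p = 1 := Polynomial.map_injective _ (algebraMap k F).injective (by simpa using h)
    exact hp.not_isUnit (this ▸ isUnit_one)
  have lift : ∀ f : Polynomial F, f.Monic → f ∣ p.map (algebraMap k F) →
      ∃ g : Polynomial k, g.map (algebraMap k F) = f ∧ g.Monic := by
    intro f hf hd
    have h1 := integralClosure.mem_lifts_of_monic_of_dvd_map F hm hf hd
    have h2 : f ∈ Polynomial.lifts (algebraMap k F) := by
      rw [Polynomial.lifts_iff_coeff_lifts] at h1 ⊢
      intro n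
      obtain ⟨⟨c, hc⟩, e⟩ := h1 n
      obtain ⟨d, hd⟩ := hF c hc.isAlgebraic
      exact ⟨d, hd.trans e⟩
    obtain ⟨g, hg, _, hg2⟩ := Polynomial.lifts_and_degree_eq_and_monic h2 hf
    exact ⟨g, hg, hg2⟩
  rw [Polynomial.irreducible_of_monic (hm.map _) hne]
  intro f g hf hg hfg
  obtain ⟨f', rfl, hf'⟩ := lift f hf ⟨g, hfg.symm⟩
  obtain ⟨g', rfl, hg'⟩ := lift g hg ⟨_, by rw [mul_comm]; exact hfg.symm⟩
  rw [← Polynomial.map_mul] at hfg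
  have h3 := Polynomial.map_injective _ (algebraMap k F).injective hfg
  rcases (Polynomial.irreducible_of_monic hm (fun h => hp.not_isUnit (h ▸ isUnit_one))).1 hp f' g' hf' hg' h3 with h | h
  · left; rw [h, Polynomial.map_one]
  · right; rw [h, Polynomial.map_one]

lemma isField_tensor_simple {k F E : Type*} [Field k] [Field F] [Algebra k F] [Field E]
    [Algebra k E] [FiniteDimensional k E] [Algebra.IsSeparable k E]
    (hF : ∀ x : F, IsAlgebraic k x → x ∈ (algebraMap k F).range) : IsField (F ⊗[k] E) := by
  obtain ⟨α, hα⟩ := Field.exists_primitive_element k E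
  have hInt0 : IsIntegral k α := Algebra.IsIntegral.isIntegral α
  have hp := minpoly.irreducible hInt0
  have hp2 := irreducible_map_of_algClosedIn hF _ hp (minpoly.monic hInt0)
  let f : Polynomial F →ₐ[F] F ⊗[k] E := Polynomial.aeval (1 ⊗ₜ α)
  have hev : ∀ q : Polynomial k, f (q.map (algebraMap k F)) = 1 ⊗ₜ (Polynomial.aeval α q) := by
    intro q
    have : ((f.restrictScalars k).comp (Polynomial.mapAlgHom (Algebra.ofId k F))) =
        (Algebra.TensorProduct.includeRight (R := k) (A := F) (B := E)).comp
          (Polynomial.aeval α) := by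
      ext
      simp [f]
    exact DFunLike.congr_fun this q
  have hsurj : Function.Surjective f := by
    intro z
    induction z with
    | zero => exact ⟨0, map_zero _⟩
    | add x y hx hy =>
      obtain ⟨a, rfl⟩ := hx
      obtain ⟨b, rfl⟩ := hy
      exact ⟨a + b, map_add _ _ _⟩
    | tmul x y =>
      have hy : y ∈ IntermediateField.adjoin k {α} := by rw [hα]; trivial
      rw [← IntermediateField.mem_toSubalgebra,
        IntermediateField.adjoin_simple_toSubalgebra_of_isAlgebraic hInt0.isAlgebraic,
        Algebra.adjoin_singleton_eq_range_aeval] at hy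
      obtain ⟨q, rfl⟩ := hy
      refine ⟨Polynomial.C x * q.map (algebraMap k F), ?_⟩
      rw [map_mul]
      erw [hev]
      simp [f, Algebra.TensorProduct.algebraMap_apply]
  have hker : RingHom.ker f = Ideal.span {(minpoly k α).map (algebraMap k F)} := by
    have hmax : (Ideal.span {(minpoly k α).map (algebraMap k F)}).IsMaximal :=
      PrincipalIdealRing.isMaximal_of_irreducible hp2
    symm
    apply hmax.eq_of_le
    · exact RingHom.ker_ne_top _
    · rw [Ideal.span_singleton_le_iff_mem, RingHom.mem_ker, hev, minpoly.aeval, tmul_zero]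
  have hmax : (RingHom.ker f).IsMaximal := by
    rw [hker]; exact PrincipalIdealRing.isMaximal_of_irreducible hp2
  let e := Ideal.quotientKerAlgEquivOfSurjective hsurj
  exact e.symm.toMulEquiv.isField ((Ideal.Quotient.maximal_ideal_iff_isField_quotient _).1 hmax)

theorem isField_tensor {k F L : Type*} [Field k] [PerfectField k] [Field F] [Algebra k F] [Field L]
    [Algebra k L] [Algebra.IsAlgebraic k L]
    (hF : ∀ x : F, IsAlgebraic k x → x ∈ (algebraMap k F).range) : IsField (F ⊗[k] L) := by
  refine ⟨exists_pair_ne _, mul_comm, ?_⟩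
  intro z hz
  obtain ⟨A, ⟨s, hs⟩, hA⟩ := exists_fg_sub z
  let E := IntermediateField.adjoin k (s : Set L)
  obtain ⟨w, hw⟩ := hA E.toSubalgebra (by
    rw [← hs]; exact IntermediateField.algebra_adjoin_le_adjoin _ _)
  have : FiniteDimensional k E := IntermediateField.finiteDimensional_adjoin
    fun x _ => Algebra.IsIntegral.isIntegral x
  have hf : IsField (F ⊗[k] E) := isField_tensor_simple hF
  have hw0 : w ≠ 0 := by rintro rfl; exact hz (by rw [← hw, map_zero])
  obtain ⟨b, hb⟩ := hf.mul_inv_cancel (a := w) hw0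
  refine ⟨Algebra.TensorProduct.map (AlgHom.id k F) E.toSubalgebra.val b, ?_⟩
  rw [← hw, ← map_mul]
  erw [hb]
  exact map_one _


section
variable {T : Type*} [CommRing T] (I : Ideal T)

lemma exists_reps (x : AdicCompletion I T) : ∃ f : ℕ → T,
    (∀ n, AdicCompletion.evalₐ I n x = Ideal.Quotient.mk _ (f n)) ∧
    ∀ m n, m ≤ n → f n - f m ∈ I ^ m := by
  obtain ⟨a, rfl⟩ := AdicCompletion.mk_surjective I T x
  refine ⟨a, fun n => AdicCompletion.evalₐ_mk I n a, fun m n h => ?_⟩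
  have := a.2 h
  rw [SModEq.sub_mem] at this
  rw [← neg_sub]
  apply neg_mem
  simpa using this

lemma evalₐ_compat {m n : ℕ} (h : m ≤ n) (x : AdicCompletion I T) (t : T)
    (ht : AdicCompletion.evalₐ I n x = Ideal.Quotient.mk _ t) :
    AdicCompletion.evalₐ I m x = Ideal.Quotient.mk _ t := by
  obtain ⟨f, hf, hf2⟩ := exists_reps I x
  rw [hf, Ideal.Quotient.eq] at ht ⊢
  have := Ideal.pow_le_pow_right h ht
  have h2 := Ideal.sub_mem _ this (hf2 m n h)
  simpa using h2

lemma evalₐ_algebraMap (n : ℕ) (t : T) :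
    AdicCompletion.evalₐ I n (algebraMap T (AdicCompletion I T) t) = Ideal.Quotient.mk _ t :=
  (AdicCompletion.evalₐ I n).commutes t

lemma evalₐ_eq_zero_iff (hI : I.FG) (n : ℕ) (x : AdicCompletion I T) :
    AdicCompletion.evalₐ I n x = 0 ↔ x ∈ (I.map (algebraMap T (AdicCompletion I T))) ^ n := by
  have h := AdicCompletion.pow_smul_top_eq_ker_eval (I := I) (M := T) (n := n) hI
  rw [← Ideal.map_pow]
  have h1 : x ∈ (I ^ n).map (algebraMap T (AdicCompletion I T)) ↔
      x ∈ (I ^ n • ⊤ : Submodule T (AdicCompletion I T)) := by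
    rw [Ideal.smul_top_eq_map]; rfl
  rw [h1, h, LinearMap.mem_ker]
  rw [← AdicCompletion.factor_eval_eq_evalₐ I x (le_of_eq (Ideal.mul_top _))]
  constructor
  · intro hx
    rw [← AdicCompletion.factor_evalₐ_eq_eval I x (le_of_eq (Ideal.mul_top _).symm),
      ← AdicCompletion.factor_eval_eq_evalₐ I x (le_of_eq (Ideal.mul_top _)), hx, map_zero]
  · intro hx
    rw [hx]; exact map_zero _

lemma complete_map (hI : I.FG) :
    IsAdicComplete (I.map (algebraMap T (AdicCompletion I T))) (AdicCompletion I T) := by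
  rw [IsAdicComplete.map_algebraMap_iff]
  exact AdicCompletion.isAdicComplete hI

lemma mapHat {T' : Type*} [CommRing T'] (I' : Ideal T') (φ : T →+* T') (h : I ≤ I'.comap φ) :
    ∃ φ' : AdicCompletion I T →+* AdicCompletion I' T', ∀ x n t,
      AdicCompletion.evalₐ I n x = Ideal.Quotient.mk _ t →
      AdicCompletion.evalₐ I' n (φ' x) = Ideal.Quotient.mk _ (φ t) := by
  have hn : ∀ n, I ^ n ≤ (I' ^ n).comap φ := fun n =>
    (Ideal.pow_right_mono h n).trans (Ideal.le_comap_pow φ n)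
  refine ⟨AdicCompletion.liftRingHom I' (fun n => (Ideal.quotientMap (I' ^ n) φ (hn n)).comp
    (AdicCompletion.evalₐ I n : AdicCompletion I T →+* T ⧸ I ^ n)) ?_, ?_⟩
  · intro m n hle
    ext x
    obtain ⟨f, hf, hf2⟩ := exists_reps I x
    have h1 := evalₐ_compat I hle x _ (hf n)
    simp only [RingHom.comp_apply, RingHom.coe_coe, hf n, h1, Ideal.quotientMap_mk]
    rfl
  · intro x n t ht
    rw [AdicCompletion.evalₐ_liftRingHom]
    simp only [RingHom.comp_apply, RingHom.coe_coe, ht, Ideal.quotientMap_mk]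

end


lemma galois_expand {k Ω : Type*} [Field k] [Field Ω] [Algebra k Ω] [IsAlgClosed Ω]
    [Algebra.IsAlgebraic k Ω] [PerfectField k] (l : Ω →ₗ[k] k) (E : IntermediateField k Ω)
    [FiniteDimensional k E] : ∃ (n : ℕ) (τ : Fin n → (Ω ≃ₐ[k] Ω)) (c : Fin n → Ω),
      ∀ x ∈ E, algebraMap k Ω (l x) = ∑ i, c i * τ i x := by
  classical
  have hli := linearIndependent_toLinearMap k E Ω
  have hcard : Fintype.card (E →ₐ[k] Ω) = Module.finrank Ω (E →ₗ[k] Ω) := by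
    rw [Module.finrank_linearMap, Module.finrank_self, mul_one]
    exact AlgHom.card k E Ω
  have hspan := hli.span_eq_top_of_card_eq_finrank' hcard
  let l' : E →ₗ[k] Ω := (Algebra.linearMap k Ω) ∘ₗ l ∘ₗ E.val.toLinearMap
  have hl' : l' ∈ Submodule.span Ω (Set.range
      (AlgHom.toLinearMap : (E →ₐ[k] Ω) → E →ₗ[k] Ω)) := by rw [hspan]; trivial
  obtain ⟨c, hc⟩ := (Submodule.mem_span_range_iff_exists_fun Ω).1 hl'
  have hlift : ∀ χ : E →ₐ[k] Ω, ∃ σ : Ω ≃ₐ[k] Ω, ∀ x : E, σ x = χ x := by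
    intro χ
    obtain ⟨σ, hσ⟩ := IsAlgClosed.surjective_domRestrict_of_isAlgebraic (K := k) (L := E) (M := Ω)
      (E := Ω) χ
    refine ⟨Algebra.IsAlgebraic.algEquivEquivAlgHom k Ω |>.symm σ, fun x => ?_⟩
    rw [← hσ]
    rfl
  choose τ hτ using hlift
  let e := Fintype.equivFin (E →ₐ[k] Ω)
  refine ⟨_, fun i => τ (e.symm i), fun i => c (e.symm i), ?_⟩
  intro x hx
  have := LinearMap.congr_fun hc ⟨x, hx⟩
  rw [e.symm.sum_comp (fun χ => c χ * τ χ x)]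
  simp only [LinearMap.sum_apply, LinearMap.smul_apply, smul_eq_mul, AlgHom.toLinearMap_apply] at this
  have h2 : l' ⟨x, hx⟩ = algebraMap k Ω (l x) := rfl
  rw [← h2, ← this]
  apply Finset.sum_congr rfl
  intro χ _
  rw [← hτ χ ⟨x, hx⟩]


/-- extension of an ideal to the base change -/
noncomputable def baseI (k Ω : Type*) {A : Type*} [Field k] [CommRing Ω] [CommRing A] [Algebra k Ω]
    [Algebra k A] (m : Ideal A) : Ideal (Ω ⊗[k] A) :=
  m.map (Algebra.TensorProduct.includeRight (R := k) (A := Ω) (B := A))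

section
variable {k Ω A : Type*} [Field k] [CommRing Ω] [CommRing A] [Algebra k Ω]
    [Algebra k A]

lemma baseI_pow (m : Ideal A) (n : ℕ) : (baseI k Ω m) ^ n = tf k (⊥ : Ideal Ω) (m ^ n) := by
  rw [baseI, ← Ideal.map_pow, tf, Ideal.map_bot, bot_sup_eq]

lemma exists_finset_agree (z : Ω ⊗[k] A) : ∃ s : Finset Ω, ∀ (g h : Ω →ₗ[k] Ω),
    (∀ x ∈ s, g x = h x) → LinearMap.rTensor A g z = LinearMap.rTensor A h z := by
  classical
  induction z with
  | zero => exact ⟨∅, fun g h _ => by simp⟩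
  | add x y hx hy =>
    obtain ⟨s, hs⟩ := hx
    obtain ⟨t, ht⟩ := hy
    refine ⟨s ∪ t, fun g h H => ?_⟩
    rw [map_add, map_add, hs g h fun x hx => H x (by simp [hx]),
      ht g h fun x hx => H x (by simp [hx])]
  | tmul x y =>
    exact ⟨{x}, fun g h H => by simp [H x (by simp)]⟩

lemma slice_rTensor {Ω' : Type*} [CommRing Ω'] [Algebra k Ω'] (l : Ω →ₗ[k] Ω') (φ : Ω' →ₗ[k] k)
    (z : Ω ⊗[k] A) : slice A φ (LinearMap.rTensor A l z) = slice A (φ ∘ₗ l) z := by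
  induction z with
  | zero => simp
  | add x y hx hy => simp only [map_add, hx, hy]
  | tmul x y => simp

lemma rTensor_mem_tf {Ω' : Type*} [CommRing Ω'] [Algebra k Ω'] (l : Ω →ₗ[k] Ω')
    (K : Ideal A) (z : Ω ⊗[k] A) (hz : z ∈ tf k (⊥ : Ideal Ω) K) :
    LinearMap.rTensor A l z ∈ tf k (⊥ : Ideal Ω') K := by
  rw [mem_tf_iff] at hz ⊢
  intro φ _
  rw [slice_rTensor]
  apply hz
  intro x hx
  rw [Ideal.mem_bot.1 hx, map_zero]

lemma exists_lim_tensor {k₁ : Type*} [Field k₁] [Algebra k k₁] [FiniteDimensional k k₁]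
    (m : Ideal A) [IsAdicComplete m A] (f : ℕ → k₁ ⊗[k] A)
    (hf : ∀ i j, i ≤ j → f j - f i ∈ tf k (⊥ : Ideal k₁) (m ^ i)) :
    ∃ a, ∀ n, f n - a ∈ tf k (⊥ : Ideal k₁) (m ^ n) := by
  let c := Module.finBasis k k₁
  have h0 : ∀ z : k₁ ⊗[k] A, z = ∑ i, c i ⊗ₜ slice A (c.coord i) z := by
    intro z
    induction z with
    | zero => simp
    | add x y hx hy =>
      conv_lhs => rw [hx, hy]
      rw [← Finset.sum_add_distrib]
      simp only [map_add, tmul_add]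
    | tmul x y =>
      simp only [slice_tmul, Module.Basis.coord_apply]
      conv_lhs => rw [← c.sum_repr x, sum_tmul]
      simp only [smul_tmul]
  have h1 : ∀ i, ∃ L, ∀ n, slice A (c.coord i) (f n) - L ∈ m ^ n := by
    intro i
    apply exists_lim
    intro n
    rw [← map_sub]
    exact (mem_tf_iff _ _ _).1 (hf n (n+1) (by omega)) _ (fun x hx => by
      rw [Ideal.mem_bot.1 hx, map_zero])
  choose L hL using h1
  refine ⟨∑ i, c i ⊗ₜ L i, fun n => ?_⟩
  rw [h0 (f n), ← Finset.sum_sub_distrib]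
  apply Ideal.sum_mem
  intro i _
  rw [← tmul_sub]
  have h2 : (1 : k₁) ⊗ₜ[k] (slice A (c.coord i) (f n) - L i) ∈ tf k (⊥ : Ideal k₁) (m ^ n) :=
    Ideal.mem_sup_right (Ideal.mem_map_of_mem
      (Algebra.TensorProduct.includeRight (R := k) (A := k₁) (B := A)) (hL i n))
  have := Ideal.mul_mem_left _ (c i ⊗ₜ (1 : A)) h2
  simpa using this

lemma tf_haus (m : Ideal A) [IsHausdorff m A] (z : Ω ⊗[k] A)
    (h : ∀ n, z ∈ tf k (⊥ : Ideal Ω) (m ^ n)) : z = 0 := by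
  rw [← Ideal.mem_bot, ← tf_bot_bot, mem_tf_iff]
  intro φ hφ
  rw [Ideal.mem_bot]
  apply eq_zero_of_haus m
  intro n
  exact (mem_tf_iff _ _ _).1 (h n) φ hφ

lemma exists_Lambda (k₁ : Type*) [Field k₁] [Algebra k k₁] [FiniteDimensional k k₁]
    [Algebra k₁ Ω] [IsScalarTower k k₁ Ω]
    (m : Ideal A) [IsAdicComplete m A] (x : AdicCompletion (baseI k Ω m) (Ω ⊗[k] A)) (hx : x ≠ 0) :
    ∃ (l : Ω →ₗ[k₁] k₁) (b : k₁ ⊗[k] A), b ≠ 0 ∧ ∀ n t,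
      AdicCompletion.evalₐ (baseI k Ω m) n x = Ideal.Quotient.mk _ t →
      LinearMap.rTensor A (l.restrictScalars k) t - b ∈ tf k (⊥ : Ideal k₁) (m ^ n) := by
  obtain ⟨f, hf, hf2⟩ := exists_reps _ x
  have h1 : ∃ n, f n ∉ tf k (⊥ : Ideal Ω) (m ^ n) := by
    by_contra! h
    apply hx
    apply AdicCompletion.ext_evalₐ
    intro n
    rw [hf, map_zero, Ideal.Quotient.eq_zero_iff_mem, baseI_pow]
    exact h n
  obtain ⟨n, hn⟩ := h1
  let g : A →ₐ[k] A ⧸ (m ^ n) := Ideal.Quotient.mkₐ k (m ^ n)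
  have hg : (⊥ : Ideal (A ⧸ m ^ n)).comap g = m ^ n := by
    exact Ideal.Quotient.mkₐ_ker k (m ^ n)
  have h2 : Algebra.TensorProduct.map (AlgHom.id k Ω) g (f n) ≠ 0 := by
    intro h
    apply hn
    rw [← hg, ← map_mem_tf_iff, h]
    exact Ideal.zero_mem _
  obtain ⟨l, hl⟩ := exists_functional k k₁ _ _ _ h2
  have h3 : ∀ w : Ω ⊗[k] A, LinearMap.rTensor (A ⧸ m ^ n) (l.restrictScalars k)
      (Algebra.TensorProduct.map (AlgHom.id k Ω) g w) =
      Algebra.TensorProduct.map (AlgHom.id k k₁) g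
        (LinearMap.rTensor A (l.restrictScalars k) w) := by
    intro w
    induction w with
    | zero => simp
    | add x y hx hy => simp only [map_add, hx, hy]
    | tmul x y => simp
  have h4 : LinearMap.rTensor A (l.restrictScalars k) (f n) ∉ tf k (⊥ : Ideal k₁) (m ^ n) := by
    intro h
    apply hl
    rw [h3, ← Ideal.mem_bot, ← tf_bot_bot, map_mem_tf_iff, hg]
    exact h
  obtain ⟨b, hb⟩ := exists_lim_tensor (k := k) (k₁ := k₁) m
    (fun n => LinearMap.rTensor A (l.restrictScalars k) (f n)) (by
      intro i j hij
      rw [← map_sub]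
      apply rTensor_mem_tf
      rw [← baseI_pow]
      exact hf2 i j hij)
  refine ⟨l, b, ?_, ?_⟩
  · rintro rfl
    apply h4
    simpa using hb n
  · intro n t ht
    rw [hf, Ideal.Quotient.eq] at ht
    have h5 : LinearMap.rTensor A (l.restrictScalars k) (f n - t) ∈ tf k (⊥ : Ideal k₁) (m ^ n) := by
      apply rTensor_mem_tf
      rw [← baseI_pow]
      exact ht
    have := Ideal.sub_mem _ (hb n) h5
    rw [map_sub] at this
    convert this using 1
    ring

/-- the inclusion of a partial base change -/
noncomputable abbrev incl (k k₁ Ω A : Type*) [Field k] [CommRing Ω] [CommRing A] [Algebra k Ω]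
    [Algebra k A] [Field k₁] [Algebra k k₁] [Algebra k₁ Ω] [IsScalarTower k k₁ Ω] :
    k₁ ⊗[k] A →ₐ[k] Ω ⊗[k] A :=
  Algebra.TensorProduct.map (IsScalarTower.toAlgHom k k₁ Ω) (AlgHom.id k A)

lemma rTensor_incl_mul (k₁ : Type*) [Field k₁] [Algebra k k₁]
    [Algebra k₁ Ω] [IsScalarTower k k₁ Ω] (l : Ω →ₗ[k₁] k₁) (a : k₁ ⊗[k] A) (z : Ω ⊗[k] A) :
    LinearMap.rTensor A (l.restrictScalars k) (incl k k₁ Ω A a * z) =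
      a * LinearMap.rTensor A (l.restrictScalars k) z := by
  induction a with
  | zero => simp
  | add x y hx hy => simp only [map_add, add_mul, hx, hy]
  | tmul x y =>
    induction z with
    | zero => simp
    | add x y hx hy => simp only [map_add, mul_add, hx, hy]
    | tmul u v =>
      have h1 : (IsScalarTower.toAlgHom k k₁ Ω) x * u = x • u := (Algebra.smul_def x u).symm
      simp only [Algebra.TensorProduct.map_tmul, Algebra.TensorProduct.tmul_mul_tmul,
        LinearMap.rTensor_tmul, LinearMap.coe_restrictScalars,
        AlgHom.id_apply]
      rw [h1, map_smul, smul_eq_mul]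

lemma incl_regular (k₁ : Type*) [Field k₁] [Algebra k k₁] [FiniteDimensional k k₁]
    [Algebra k₁ Ω] [IsScalarTower k k₁ Ω] [IsDomain (k₁ ⊗[k] A)]
    (m : Ideal A) [IsAdicComplete m A] (a : k₁ ⊗[k] A) (ha : a ≠ 0)
    (y : AdicCompletion (baseI k Ω m) (Ω ⊗[k] A))
    (h : algebraMap (Ω ⊗[k] A) _ (incl k k₁ Ω A a) * y = 0) : y = 0 := by
  by_contra hy
  obtain ⟨l, b, hb, hl⟩ := exists_Lambda k₁ m y hy
  have : a * b = 0 := by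
    apply tf_haus m
    intro n
    obtain ⟨f, hf, hf2⟩ := exists_reps _ y
    have h1 := congrArg (AdicCompletion.evalₐ (baseI k Ω m) n) h
    rw [map_mul, evalₐ_algebraMap, hf, ← map_mul, map_zero, Ideal.Quotient.eq_zero_iff_mem,
      baseI_pow] at h1
    have h2 := rTensor_mem_tf (l.restrictScalars k) _ _ h1
    rw [rTensor_incl_mul] at h2
    have h3 := Ideal.mul_mem_left _ a (hl n _ (hf n))
    have := Ideal.sub_mem _ h2 h3
    convert this using 1
    ring
  exact (mul_ne_zero ha hb) this

end


lemma prime_closed {E : Type*} [CommRing E] [IsNoetherianRing E] [IsLocalRing E] (P : Ideal E)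
    [P.IsPrime] (u : E) (h : ∀ n, u ∈ P ⊔ (IsLocalRing.maximalIdeal E) ^ n) : u ∈ P := by
  have : Nontrivial (E ⧸ P) := Ideal.Quotient.nontrivial_iff.2 (Ideal.IsPrime.ne_top ‹_›)
  have : IsLocalRing (E ⧸ P) := .of_surjective' (Ideal.Quotient.mk P) Ideal.Quotient.mk_surjective
  rw [← Ideal.Quotient.eq_zero_iff_mem, ← Ideal.mem_bot,
    ← Ideal.iInf_pow_eq_bot_of_isLocalRing ((IsLocalRing.maximalIdeal E).map (Ideal.Quotient.mk P))]
  · rw [Ideal.mem_iInf]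
    intro n
    rw [← Ideal.map_pow, ← Ideal.mem_comap, Ideal.comap_map_of_surjective _
      Ideal.Quotient.mk_surjective, ← RingHom.ker_eq_comap_bot, Ideal.mk_ker, sup_comm]
    exact h n
  · intro h1
    rw [Ideal.eq_top_iff_one, ← map_one (Ideal.Quotient.mk P), ← Ideal.mem_comap,
      Ideal.comap_map_of_surjective _
      Ideal.Quotient.mk_surjective, ← RingHom.ker_eq_comap_bot, Ideal.mk_ker] at h1
    have h2 := IsLocalRing.le_maximalIdeal (Ideal.IsPrime.ne_top ‹P.IsPrime›)
    rw [sup_eq_left.2 h2] at h1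
    exact (Ideal.ne_top_iff_one _).1 (Ideal.IsPrime.ne_top inferInstance) h1

lemma minimal_stab {E : Type*} [CommRing E] [IsNoetherianRing E] [IsLocalRing E] (P : Ideal E)
    (hP : P ∈ minimalPrimes E) : ∃ (u : E) (N : ℕ), ∀ e : E ≃+* E,
      e u - u ∈ (IsLocalRing.maximalIdeal E) ^ N → P.comap (e : E →+* E) = P := by
  classical
  have hPp : P.IsPrime := hP.1.1
  have hfin : (minimalPrimes E).Finite := minimalPrimes.finite_of_isNoetherianRing E
  have h1 : ∀ Q : Ideal E, ∃ u : E, u ∉ P ∧ (Q ∈ minimalPrimes E → Q ≠ P → u ∈ Q) := by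
    intro Q
    by_cases hQ : Q ∈ minimalPrimes E
    · by_cases hQP : Q = P
      · exact ⟨1, fun h => hPp.ne_top ((Ideal.eq_top_iff_one _).2 h), fun _ h => absurd hQP h⟩
      · have : ¬ Q ≤ P := fun h => hQP (le_antisymm h (hP.2 hQ.1 h))
        obtain ⟨u, hu, hu2⟩ := SetLike.not_le_iff_exists.1 this
        exact ⟨u, hu2, fun _ _ => hu⟩
    · exact ⟨1, fun h => hPp.ne_top ((Ideal.eq_top_iff_one _).2 h), fun h => absurd h hQ⟩
  choose v hv hv2 using h1
  let u := ∏ Q ∈ hfin.toFinset, v Q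
  have hu : u ∉ P := by
    intro h
    obtain ⟨Q, _, hQ⟩ := (hPp.prod_mem_iff).1 h
    exact hv Q hQ
  have h2 : ∃ N, u ∉ P ⊔ (IsLocalRing.maximalIdeal E) ^ N := by
    by_contra! h
    exact hu (prime_closed P u h)
  obtain ⟨N, hN⟩ := h2
  refine ⟨u, N, fun e he => ?_⟩
  by_contra hne
  have hmin : P.comap (e : E →+* E) ∈ minimalPrimes E := by
    refine ⟨⟨Ideal.IsPrime.comap _, bot_le⟩, ?_⟩
    rintro Q ⟨hQ, -⟩ hle x hx
    have hQ' : (Q.comap (e.symm : E →+* E)).IsPrime := Ideal.IsPrime.comap _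
    have : P ≤ Q.comap (e.symm : E →+* E) := by
      apply hP.2 ⟨hQ', bot_le⟩
      intro y hy
      have hy' : e.symm y ∈ Q := hy
      have h5 : e (e.symm y) ∈ P := hle hy'
      rwa [e.apply_symm_apply] at h5
    have h6 : e.symm (e x) ∈ Q := this hx
    rwa [e.symm_apply_apply] at h6
  have h3 : u ∈ P.comap (e : E →+* E) := by
    have : v (P.comap (e : E →+* E)) ∣ u := Finset.dvd_prod_of_mem v (by simpa using hmin)
    exact Ideal.mem_of_dvd _ this (hv2 _ hmin hne)
  apply hN
  have h4 : e u ∈ P := h3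
  have := Ideal.sub_mem _ (Ideal.mem_sup_left (T := IsLocalRing.maximalIdeal E ^ N) h4)
    (Ideal.mem_sup_right (S := P) he)
  simpa using this

section
variable {k Ω A : Type*} [Field k] [Field Ω] [CommRing A] [Algebra k Ω] [Algebra k A]

lemma exists_sigmaHat (m : Ideal A) (σ : Ω ≃ₐ[k] Ω) :
    ∃ e : AdicCompletion (baseI k Ω m) (Ω ⊗[k] A) ≃+* AdicCompletion (baseI k Ω m) (Ω ⊗[k] A),
      ∀ x n t, AdicCompletion.evalₐ (baseI k Ω m) n x = Ideal.Quotient.mk _ t →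
      AdicCompletion.evalₐ (baseI k Ω m) n (e x) =
        Ideal.Quotient.mk _ (LinearMap.rTensor A σ.toLinearMap t) := by
  have key : ∀ τ : Ω ≃ₐ[k] Ω, baseI k Ω m ≤ (baseI k Ω m).comap
      (Algebra.TensorProduct.map (τ : Ω →ₐ[k] Ω) (AlgHom.id k A) : Ω ⊗[k] A →+* Ω ⊗[k] A) := by
    intro τ
    rw [baseI, Ideal.map_le_iff_le_comap]
    intro x hx
    have := Ideal.mem_map_of_mem (Algebra.TensorProduct.includeRight (R := k) (A := Ω) (B := A)) hx
    simpa [Ideal.mem_comap] using this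
  have hmap : ∀ (τ : Ω ≃ₐ[k] Ω) t, (Algebra.TensorProduct.map (τ : Ω →ₐ[k] Ω) (AlgHom.id k A) :
      Ω ⊗[k] A →+* Ω ⊗[k] A) t = LinearMap.rTensor A τ.toLinearMap t := fun τ t => rfl
  obtain ⟨f, hf⟩ := mapHat _ _ _ (key σ)
  obtain ⟨g, hg⟩ := mapHat _ _ _ (key σ.symm)
  simp only [hmap] at hf hg
  have hcomp : ∀ (a b : Ω ≃ₐ[k] Ω) (h : ∀ x, a (b x) = x) (t : Ω ⊗[k] A),
      LinearMap.rTensor A a.toLinearMap (LinearMap.rTensor A b.toLinearMap t) = t := by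
    intro a b h t
    induction t with
    | zero => simp
    | add x y hx hy => simp only [map_add, hx, hy]
    | tmul x y => simp [h]
  refine ⟨RingEquiv.ofRingHom f g ?_ ?_, ?_⟩
  · ext1 x
    apply AdicCompletion.ext_evalₐ
    intro n
    obtain ⟨r, hr, -⟩ := exists_reps _ x
    have := hf _ n _ (hg x n _ (hr n))
    simp only [RingHom.coe_comp, Function.comp, RingHom.id_apply]
    rw [this, hr, hcomp _ _ (by simp)]
  · ext1 x
    apply AdicCompletion.ext_evalₐ
    intro n
    obtain ⟨r, hr, -⟩ := exists_reps _ x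
    have := hg _ n _ (hf x n _ (hr n))
    simp only [RingHom.coe_comp, Function.comp, RingHom.id_apply]
    rw [this, hr, hcomp _ _ (by simp)]
  · intro x n t ht
    exact hf x n t ht

lemma baseI_isMaximal (m : Ideal A) (h : IsField (Ω ⊗[k] (A ⧸ m))) :
    (baseI k Ω m).IsMaximal := by
  let g := Algebra.TensorProduct.map (AlgHom.id k Ω) (Ideal.Quotient.mkₐ k m)
  have hg : Function.Surjective g := by
    exact TensorProduct.map_surjective Function.surjective_id (Ideal.Quotient.mkₐ_surjective k m)
  have hk : RingHom.ker g = baseI k Ω m := by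
    ext z
    have := baseI_pow (k := k) (Ω := Ω) m 1
    rw [pow_one, pow_one] at this
    rw [this, RingHom.mem_ker, ← Ideal.mem_bot, ← tf_bot_bot, map_mem_tf_iff]
    have : (⊥ : Ideal (A ⧸ m)).comap (Ideal.Quotient.mkₐ k m) = m := Ideal.Quotient.mkₐ_ker k m
    rw [this]
  apply Ideal.Quotient.maximal_of_isField
  rw [← hk]
  exact (Ideal.quotientKerAlgEquivOfSurjective hg).toMulEquiv.isField h

lemma hat_struct [IsNoetherianRing A] (m : Ideal A) (h : IsField (Ω ⊗[k] (A ⧸ m))) :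
    ∃ _ : IsLocalRing (AdicCompletion (baseI k Ω m) (Ω ⊗[k] A)),
      IsNoetherianRing (AdicCompletion (baseI k Ω m) (Ω ⊗[k] A)) ∧
      IsLocalRing.maximalIdeal (AdicCompletion (baseI k Ω m) (Ω ⊗[k] A)) =
        (baseI k Ω m).map (algebraMap _ _) ∧
      IsAdicComplete (IsLocalRing.maximalIdeal (AdicCompletion (baseI k Ω m) (Ω ⊗[k] A)))
        (AdicCompletion (baseI k Ω m) (Ω ⊗[k] A)) := by
  have hm := baseI_isMaximal m h
  have hfg : (baseI k Ω m).FG := Ideal.FG.map (IsNoetherian.noetherian m) _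
  set I := baseI k Ω m
  have hM : (I.map (algebraMap _ (AdicCompletion I (Ω ⊗[k] A)))).IsMaximal := by
    have hs := AdicCompletion.surjective_evalₐ I 1
    have hk : RingHom.ker (AdicCompletion.evalₐ I 1) =
        (I.map (algebraMap _ (AdicCompletion I (Ω ⊗[k] A)))) := by
      ext x
      rw [RingHom.mem_ker, evalₐ_eq_zero_iff I hfg, pow_one]
    rw [← hk]
    apply Ideal.Quotient.maximal_of_isField
    refine (Ideal.quotientKerAlgEquivOfSurjective hs).toMulEquiv.isField ?_
    rw [pow_one]
    exact (Ideal.Quotient.maximal_ideal_iff_isField_quotient _).1 hm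
  have hc := complete_map I hfg
  have hl : IsLocalRing (AdicCompletion I (Ω ⊗[k] A)) := isLocalRing_of_isAdicComplete_maximal
    (I.map (algebraMap _ (AdicCompletion I (Ω ⊗[k] A))))
  have he := (IsLocalRing.eq_maximalIdeal hM).symm
  refine ⟨hl, ?_, he, he ▸ hc⟩
  have : IsNoetherianRing ((AdicCompletion I (Ω ⊗[k] A)) ⧸ (I.map (algebraMap _ (AdicCompletion I (Ω ⊗[k] A))))) := by
    letI := Ideal.Quotient.field (I.map (algebraMap _ (AdicCompletion I (Ω ⊗[k] A))))
    infer_instance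
  exact isNoetherianRing_of_complete (I.map (algebraMap _ (AdicCompletion I (Ω ⊗[k] A))))
    (Ideal.FG.map hfg _)

end


lemma isDomain_baseChange {k k₁ A : Type*} [Field k] [PerfectField k] [Field k₁] [Algebra k k₁]
    [Algebra.IsAlgebraic k k₁] [CommRing A] [IsDomain A] [Algebra k A]
    (H1 : ∀ x : FractionRing A, IsAlgebraic k x → x ∈ (algebraMap k (FractionRing A)).range) :
    IsDomain (k₁ ⊗[k] A) := by
  have h1 : IsField (FractionRing A ⊗[k] k₁) := isField_tensor H1
  have h3 := h1.isDomain
  have h2 : IsDomain (k₁ ⊗[k] FractionRing A) :=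
    (Algebra.TensorProduct.comm k k₁ (FractionRing A)).toMulEquiv.isDomain _
  let g := Algebra.TensorProduct.map (AlgHom.id k k₁) (IsScalarTower.toAlgHom k A (FractionRing A))
  have hg : Function.Injective g := by
    apply Module.Flat.lTensor_preserves_injective_linearMap (M := k₁)
      (IsScalarTower.toAlgHom k A (FractionRing A)).toLinearMap
    exact IsFractionRing.injective A (FractionRing A)
  exact hg.isDomain g.toRingHom

section
variable {k Ω A : Type*} [Field k] [PerfectField k] [Field Ω] [IsAlgClosed Ω] [CommRing A]
  [Algebra k Ω] [Algebra.IsAlgebraic k Ω] [Algebra k A] [IsDomain A] [IsNoetherianRing A]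

lemma rTensor_sum_mul (z : Ω ⊗[k] A) (n : ℕ) (c : Fin n → Ω) (τ : Fin n → (Ω ≃ₐ[k] Ω)) :
    LinearMap.rTensor A (∑ i, (LinearMap.mulLeft k (c i)) ∘ₗ (τ i).toLinearMap) z =
    ∑ i, (c i ⊗ₜ[k] (1 : A)) * LinearMap.rTensor A (τ i).toLinearMap z := by
  induction z with
  | zero => simp
  | add x y hx hy => simp only [map_add, hx, hy, mul_add, Finset.sum_add_distrib]
  | tmul x y => simp [LinearMap.sum_apply, sum_tmul]

theorem hat_domain (m : Ideal A) [IsAdicComplete m A]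
    (H1 : ∀ x : FractionRing A, IsAlgebraic k x → x ∈ (algebraMap k (FractionRing A)).range)
    (h : IsField (Ω ⊗[k] (A ⧸ m))) :
    IsDomain (AdicCompletion (baseI k Ω m) (Ω ⊗[k] A)) := by
  classical
  have hfg : (baseI k Ω m).FG := Ideal.FG.map (IsNoetherian.noetherian m) _
  obtain ⟨hl, hn, hM, hc⟩ := hat_struct m h
  obtain ⟨P, hP, -⟩ := Ideal.exists_minimalPrimes_le
    (bot_le (a := IsLocalRing.maximalIdeal (AdicCompletion (baseI k Ω m) (Ω ⊗[k] A))))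
  have hPp : P.IsPrime := hP.1.1
  suffices hbot : P = ⊥ by
    subst hbot
    exact IsDomain.of_bot_isPrime _
  by_contra hne
  obtain ⟨f, hf, hf0⟩ := Submodule.exists_mem_ne_zero_of_ne_bot hne
  obtain ⟨u, N, hu⟩ := minimal_stab P hP
  rw [hM] at hu
  obtain ⟨ru, hru, -⟩ := exists_reps _ u
  obtain ⟨s, hs⟩ := exists_finset_agree (ru N)
  let kf := IntermediateField.adjoin k (s : Set Ω)
  have : FiniteDimensional k kf := IntermediateField.finiteDimensional_adjoin
    fun x _ => Algebra.IsIntegral.isIntegral x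
  have hperf : PerfectField kf := Algebra.IsAlgebraic.perfectField k
  have halg : Algebra.IsAlgebraic kf Ω := Algebra.IsAlgebraic.tower_top (K := k) kf
  have hdom : IsDomain (kf ⊗[k] A) := isDomain_baseChange H1
  obtain ⟨l, b, hb, hlb⟩ := exists_Lambda kf m f hf0
  have hmem : algebraMap (Ω ⊗[k] A) (AdicCompletion (baseI k Ω m) (Ω ⊗[k] A))
      (incl k kf Ω A b) ∈ P := by
    apply prime_closed
    intro n
    rw [hM]
    obtain ⟨rf, hrf, -⟩ := exists_reps _ f
    obtain ⟨s', hs'⟩ := exists_finset_agree (rf n)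
    let E := IntermediateField.adjoin kf (s' : Set Ω)
    have : FiniteDimensional kf E := IntermediateField.finiteDimensional_adjoin
      fun x _ => Algebra.IsIntegral.isIntegral x
    obtain ⟨d, τ, c, hτ⟩ := galois_expand l E
    have hexp : incl k kf Ω A (LinearMap.rTensor A (l.restrictScalars k) (rf n)) =
        ∑ i, (c i ⊗ₜ[k] (1 : A)) *
          LinearMap.rTensor A ((τ i).restrictScalars k).toLinearMap (rf n) := by
      rw [← rTensor_sum_mul]
      have : incl k kf Ω A (LinearMap.rTensor A (l.restrictScalars k) (rf n)) =
          LinearMap.rTensor A ((IsScalarTower.toAlgHom k kf Ω).toLinearMap ∘ₗ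
            l.restrictScalars k) (rf n) := by
        rw [LinearMap.rTensor_comp]; rfl
      rw [this]
      apply hs'
      intro x hx
      have := hτ x (IntermediateField.subset_adjoin _ _ hx)
      simpa [LinearMap.sum_apply] using this
    choose e he using fun i => exists_sigmaHat m ((τ i).restrictScalars k)
    have hefP : ∀ i, e i f ∈ P := by
      intro i
      have h1 := hu (e i) (by
        rw [← evalₐ_eq_zero_iff _ hfg, map_sub, he i u N _ (hru N), hru N, ← map_sub,
          Ideal.Quotient.eq_zero_iff_mem]
        have : LinearMap.rTensor A ((τ i).restrictScalars k).toLinearMap (ru N) = ru N := by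
          rw [hs _ LinearMap.id, LinearMap.rTensor_id]
          · rfl
          · intro x hx
            have := (τ i).commutes ⟨x, IntermediateField.subset_adjoin k (s : Set Ω) hx⟩
            exact this
        rw [this, sub_self]
        exact Ideal.zero_mem _)
      have h2 : f ∈ P.comap (e i : _ →+* _) := by rw [h1]; exact hf
      exact h2
    let y := ∑ i, algebraMap (Ω ⊗[k] A) (AdicCompletion (baseI k Ω m) (Ω ⊗[k] A))
      (c i ⊗ₜ[k] (1 : A)) * e i f
    have hy : y ∈ P := Ideal.sum_mem _ fun i _ => Ideal.mul_mem_left _ _ (hefP i)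
    have h3 : algebraMap (Ω ⊗[k] A) (AdicCompletion (baseI k Ω m) (Ω ⊗[k] A))
      (incl k kf Ω A b) - y ∈ ((baseI k Ω m).map (algebraMap _ _)) ^ n := by
      rw [← evalₐ_eq_zero_iff _ hfg, map_sub, evalₐ_algebraMap]
      have : AdicCompletion.evalₐ (baseI k Ω m) n y = Ideal.Quotient.mk _
          (∑ i, (c i ⊗ₜ[k] (1 : A)) *
          LinearMap.rTensor A ((τ i).restrictScalars k).toLinearMap (rf n)) := by
        simp only [y, map_sum, map_mul]
        apply Finset.sum_congr rfl
        intro i _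
        rw [he i f n _ (hrf n), evalₐ_algebraMap]
      rw [this, ← hexp, ← map_sub, ← map_sub, Ideal.Quotient.eq_zero_iff_mem, baseI_pow]
      have h6 := rTensor_mem_tf (IsScalarTower.toAlgHom k kf Ω).toLinearMap _ _ (hlb n _ (hrf n))
      rw [← Ideal.neg_mem_iff, ← map_neg, neg_sub]
      exact h6
    have := Ideal.add_mem _ (Ideal.mem_sup_right (S := P) h3) (Ideal.mem_sup_left hy)
    simpa using this
  have h4 := Set.disjoint_left.1 (Ideal.disjoint_nonZeroDivisors_of_mem_minimalPrimes hP) hmem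
  apply h4
  rw [SetLike.mem_coe, mem_nonZeroDivisors_iff_right]
  intro y hy
  exact incl_regular kf m b hb y (by rw [mul_comm]; exact hy)

end


section
variable {k k₁ k₂ Ω A B A' B' : Type*} [Field k] [Field k₁] [Field k₂] [Field Ω]
  [CommRing A] [CommRing B] [CommRing A'] [CommRing B']
  [Algebra k k₁] [Algebra k k₂] [Algebra k Ω] [Algebra k₁ Ω] [Algebra k₂ Ω]
  [IsScalarTower k k₁ Ω] [IsScalarTower k k₂ Ω]
  [Algebra k A] [Algebra k₁ A] [IsScalarTower k k₁ A]
  [Algebra k B] [Algebra k₂ B] [IsScalarTower k k₂ B]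
  [Algebra Ω A'] [Algebra Ω B']

lemma exists_psi (i : A →+* A')
    (hi : ∀ c, i (algebraMap k₁ A c) = algebraMap Ω A' (algebraMap k₁ Ω c)) (j : B →+* B')
    (hj : ∀ c, j (algebraMap k₂ B c) = algebraMap Ω B' (algebraMap k₂ Ω c)) :
    ∃ ψ : A ⊗[k] B →+* A' ⊗[Ω] B', ∀ a b, ψ (a ⊗ₜ b) = i a ⊗ₜ j b := by
  letI : Algebra k (A' ⊗[Ω] B') := ((algebraMap Ω (A' ⊗[Ω] B')).comp (algebraMap k Ω)).toAlgebra
  let f : A →ₐ[k] A' ⊗[Ω] B' :=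
    { (Algebra.TensorProduct.includeLeft (R := Ω) (S := Ω) (A := A') (B := B')).toRingHom.comp i with
      commutes' := fun c => by
        have : i (algebraMap k A c) = algebraMap Ω A' (algebraMap k Ω c) := by
          rw [IsScalarTower.algebraMap_apply k k₁ A, hi, ← IsScalarTower.algebraMap_apply k k₁ Ω]
        change (Algebra.TensorProduct.includeLeft (R := Ω) (S := Ω) (A := A') (B := B'))
          (i (algebraMap k A c)) = algebraMap Ω (A' ⊗[Ω] B') (algebraMap k Ω c)
        rw [this, AlgHom.commutes] }
  let g : B →ₐ[k] A' ⊗[Ω] B' :=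
    { (Algebra.TensorProduct.includeRight (R := Ω) (A := A') (B := B')).toRingHom.comp j with
      commutes' := fun c => by
        have : j (algebraMap k B c) = algebraMap Ω B' (algebraMap k Ω c) := by
          rw [IsScalarTower.algebraMap_apply k k₂ B, hj, ← IsScalarTower.algebraMap_apply k k₂ Ω]
        change (Algebra.TensorProduct.includeRight (R := Ω) (A := A') (B := B'))
          (j (algebraMap k B c)) = algebraMap Ω (A' ⊗[Ω] B') (algebraMap k Ω c)
        rw [this, AlgHom.commutes] }
  refine ⟨(Algebra.TensorProduct.lift f g (fun x y => Commute.all _ _)).toRingHom, fun a b => ?_⟩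
  have : (Algebra.TensorProduct.lift f g (fun x y => Commute.all _ _)) (a ⊗ₜ b) = f a * g b := by
    simp
  refine this.trans ?_
  change (i a ⊗ₜ[Ω] (1 : B')) * ((1 : A') ⊗ₜ[Ω] j b) = _
  simp

lemma psi_mem_iff (i : A →+* A') (j : B →+* B') (ψ : A ⊗[k] B →+* A' ⊗[Ω] B')
    (hψ : ∀ a b, ψ (a ⊗ₜ b) = i a ⊗ₜ j b)
    (hinj : Function.Injective (Algebra.TensorProduct.productMap
      (IsScalarTower.toAlgHom k k₁ Ω) (IsScalarTower.toAlgHom k k₂ Ω)))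
    (J : Ideal A) (K : Ideal B) (J' : Ideal A') (K' : Ideal B')
    (hJ : J ≤ J'.comap i) (hK : K ≤ K'.comap j)
    (hA : ∀ φ : A →ₗ[k₁] k₁, (∀ x ∈ J, φ x = 0) → ∃ φ' : A' →ₗ[Ω] Ω, (∀ x ∈ J', φ' x = 0) ∧
      ∀ a, φ' (i a) = algebraMap k₁ Ω (φ a))
    (hB : ∀ φ : B →ₗ[k₂] k₂, (∀ x ∈ K, φ x = 0) → ∃ φ' : B' →ₗ[Ω] Ω, (∀ x ∈ K', φ' x = 0) ∧
      ∀ a, φ' (j a) = algebraMap k₂ Ω (φ a)) (z : A ⊗[k] B) :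
    ψ z ∈ tf Ω J' K' ↔ z ∈ tf k J K := by
  constructor
  · intro h
    by_contra hz
    rw [tf_eq_ker, RingHom.mem_ker] at hz
    obtain ⟨φ, hφ⟩ := exists_functional k k₁ _ _ _ hz
    have h2 : (TensorProduct.comm k _ _ ((LinearMap.rTensor (B ⧸ K) (φ.restrictScalars k))
      ((Algebra.TensorProduct.map (Ideal.Quotient.mkₐ k J) (Ideal.Quotient.mkₐ k K)) z))) ≠ 0 := by
      simpa using hφ
    obtain ⟨χ, hχ⟩ := exists_functional k k₂ _ _ _ h2
    let φ0 : A →ₗ[k₁] k₁ := φ ∘ₗ (Ideal.Quotient.mkₐ k₁ J).toLinearMap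
    let χ0 : B →ₗ[k₂] k₂ := χ ∘ₗ (Ideal.Quotient.mkₐ k₂ K).toLinearMap
    obtain ⟨φ', h1', h2'⟩ := hA φ0 (fun x hx => by
      have : (Ideal.Quotient.mkₐ k₁ J) x = 0 := Ideal.Quotient.eq_zero_iff_mem.2 hx
      simp only [φ0, LinearMap.comp_apply, AlgHom.toLinearMap_apply, this, map_zero])
    obtain ⟨χ', h3', h4'⟩ := hB χ0 (fun x hx => by
      have : (Ideal.Quotient.mkₐ k₂ K) x = 0 := Ideal.Quotient.eq_zero_iff_mem.2 hx
      simp only [χ0, LinearMap.comp_apply, AlgHom.toLinearMap_apply, this, map_zero])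
    have h5 : χ' (slice B' φ' (ψ z)) = 0 := h3' _ ((mem_tf_iff _ _ _).1 h φ' h1')
    have h6 : ∀ w : A ⊗[k] B, χ' (slice B' φ' (ψ w)) =
        Algebra.TensorProduct.productMap
          (IsScalarTower.toAlgHom k k₁ Ω) (IsScalarTower.toAlgHom k k₂ Ω)
          (TensorProduct.map (φ0.restrictScalars k) (χ0.restrictScalars k) w) := by
      intro w
      induction w with
      | zero => simp
      | add x y hx hy => simp only [map_add, hx, hy]
      | tmul x y => simp [hψ, h2', h4']
    rw [h6] at h5
    have h7 := hinj (h5.trans (map_zero _).symm)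
    apply hχ
    have h8 : ∀ w : A ⊗[k] B, (LinearMap.rTensor k₁ (χ.restrictScalars k))
        (TensorProduct.comm k _ _ ((LinearMap.rTensor (B ⧸ K) (φ.restrictScalars k))
      ((Algebra.TensorProduct.map (Ideal.Quotient.mkₐ k J) (Ideal.Quotient.mkₐ k K)) w))) =
      TensorProduct.comm k _ _
        (TensorProduct.map (φ0.restrictScalars k) (χ0.restrictScalars k) w) := by
      intro w
      induction w with
      | zero => simp
      | add x y hx hy => simp only [map_add, hx, hy]
      | tmul x y => simp [φ0, χ0]
    rw [h8, h7, map_zero]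
  · intro h
    have : tf k J K ≤ (tf Ω J' K').comap ψ := by
      rw [tf, sup_le_iff, Ideal.map_le_iff_le_comap, Ideal.map_le_iff_le_comap]
      constructor
      · intro x hx
        rw [Ideal.mem_comap, Ideal.mem_comap, Algebra.TensorProduct.includeLeft_apply, hψ, map_one]
        exact Ideal.mem_sup_left (Ideal.mem_map_of_mem
          (Algebra.TensorProduct.includeLeft (R := Ω) (S := Ω) (A := A') (B := B')) (hJ hx))
      · intro x hx
        rw [Ideal.mem_comap, Ideal.mem_comap, Algebra.TensorProduct.includeRight_apply, hψ, map_one]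
        exact Ideal.mem_sup_right (Ideal.mem_map_of_mem
          (Algebra.TensorProduct.includeRight (R := Ω) (A := A') (B := B')) (hK hx))
    exact this h

lemma extend_functional [IsNoetherianRing A] (m : Ideal A) (n : ℕ) (φ : A →ₗ[k₁] k₁)
    (hφ : ∀ x ∈ m ^ n, φ x = 0) :
    ∃ φ' : AdicCompletion (baseI k₁ Ω m) (Ω ⊗[k₁] A) →ₗ[Ω] Ω,
      (∀ x ∈ ((baseI k₁ Ω m).map
        (algebraMap _ (AdicCompletion (baseI k₁ Ω m) (Ω ⊗[k₁] A)))) ^ n, φ' x = 0) ∧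
      ∀ a, φ' (algebraMap (Ω ⊗[k₁] A) _ (1 ⊗ₜ a)) = algebraMap k₁ Ω (φ a) := by
  have hfg : (baseI k₁ Ω m).FG := Ideal.FG.map (IsNoetherian.noetherian m) _
  let φ0 : Ω ⊗[k₁] A →ₗ[Ω] Ω :=
    (TensorProduct.AlgebraTensorModule.rid k₁ Ω Ω).toLinearMap ∘ₗ LinearMap.baseChange Ω φ
  have h0 : ∀ (w : Ω) (a : A), φ0 (w ⊗ₜ a) = φ a • w := by
    intro w a
    simp [φ0]
  have hk : ∀ z ∈ (baseI k₁ Ω m) ^ n, φ0 z = 0 := by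
    intro z hz
    rw [baseI, ← Ideal.map_pow] at hz
    suffices ∀ a, φ0 (a * z) = 0 by simpa using this 1
    refine Submodule.span_induction (p := fun z _ => ∀ a, φ0 (a * z) = 0) ?_ ?_ ?_ ?_ hz
    · rintro _ ⟨x, hx, rfl⟩ a
      induction a with
      | zero => simp
      | add x y hx hy => rw [add_mul, map_add, hx, hy, add_zero]
      | tmul u v =>
        simp [h0, hφ _ (Ideal.mul_mem_left _ v hx)]
    · simp
    · intro x y _ _ hx hy a
      rw [mul_add, map_add, hx, hy, add_zero]
    · intro b x _ hx a
      rw [smul_eq_mul, ← mul_assoc]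
      exact hx _
  have hk2 : ∀ t t', Ideal.Quotient.mk ((baseI k₁ Ω m) ^ n) t = Ideal.Quotient.mk _ t' →
      φ0 t = φ0 t' := by
    intro t t' h
    rw [Ideal.Quotient.eq] at h
    have := hk _ h
    rwa [map_sub, sub_eq_zero] at this
  choose r hr _ using fun x => exists_reps (baseI k₁ Ω m) (T := Ω ⊗[k₁] A) x
  have hmain : ∀ x t, AdicCompletion.evalₐ (baseI k₁ Ω m) n x = Ideal.Quotient.mk _ t →
      φ0 (r x n) = φ0 t := fun x t h => hk2 _ _ ((hr x n).symm.trans h)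
  refine ⟨{ toFun := fun x => φ0 (r x n), map_add' := ?_, map_smul' := ?_ }, ?_, ?_⟩
  · intro x y
    rw [← map_add]
    apply hmain
    rw [map_add, hr, hr, map_add]
  · intro c x
    rw [RingHom.id_apply, ← map_smul]
    apply hmain
    rw [← algebraMap_smul (Ω ⊗[k₁] A) c x, map_smul, hr, ← algebraMap_smul (Ω ⊗[k₁] A) c (r x n)]
    rfl
  · intro x hx
    rw [← evalₐ_eq_zero_iff _ hfg] at hx
    change φ0 (r x n) = 0
    rw [hmain x 0 (by rw [hx, map_zero]), map_zero]
  · intro a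
    change φ0 (r _ n) = _
    rw [hmain _ (1 ⊗ₜ a) (evalₐ_algebraMap _ _ _), h0, Algebra.smul_def, mul_one]

end

theorem CDom_main {k k₁ k₂ Ω A B : Type*} [Field k] [Field k₁] [Field k₂] [Field Ω]
    [CommRing A] [CommRing B]
    [Algebra k k₁] [Algebra k k₂] [Algebra k Ω] [Algebra k₁ Ω] [Algebra k₂ Ω]
    [IsScalarTower k k₁ Ω] [IsScalarTower k k₂ Ω]
    [Algebra k A] [Algebra k₁ A] [IsScalarTower k k₁ A]
    [Algebra k B] [Algebra k₂ B] [IsScalarTower k k₂ B]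
    [PerfectField k₁] [PerfectField k₂] [IsAlgClosed Ω] [Algebra.IsAlgebraic k₁ Ω]
    [Algebra.IsAlgebraic k₂ Ω] [IsDomain A] [IsDomain B] [IsNoetherianRing A] [IsNoetherianRing B]
    (mA : Ideal A) (mB : Ideal B) [mA.IsMaximal] [mB.IsMaximal] [IsAdicComplete mA A]
    [IsAdicComplete mB B]
    (hinj : Function.Injective (Algebra.TensorProduct.productMap
      (IsScalarTower.toAlgHom k k₁ Ω) (IsScalarTower.toAlgHom k k₂ Ω)))
    (H1 : ∀ x : FractionRing A, IsAlgebraic k₁ x → x ∈ (algebraMap k₁ (FractionRing A)).range)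
    (H1' : ∀ x : FractionRing B, IsAlgebraic k₂ x → x ∈ (algebraMap k₂ (FractionRing B)).range)
    (H2 : ∀ x : A ⧸ mA, IsAlgebraic k₁ x → x ∈ (algebraMap k₁ (A ⧸ mA)).range)
    (H2' : ∀ x : B ⧸ mB, IsAlgebraic k₂ x → x ∈ (algebraMap k₂ (B ⧸ mB)).range) :
    CDom (fun n => tf k (mA ^ n) (mB ^ n)) := by
  have hfA : IsField (Ω ⊗[k₁] (A ⧸ mA)) := by
    letI := Ideal.Quotient.field mA
    have := isField_tensor (L := Ω) H2
    exact (Algebra.TensorProduct.comm k₁ Ω (A ⧸ mA)).toMulEquiv.isField this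
  have hfB : IsField (Ω ⊗[k₂] (B ⧸ mB)) := by
    letI := Ideal.Quotient.field mB
    have := isField_tensor (L := Ω) H2'
    exact (Algebra.TensorProduct.comm k₂ Ω (B ⧸ mB)).toMulEquiv.isField this
  have hdA := hat_domain mA H1 hfA
  have hdB := hat_domain mB H1' hfB
  obtain ⟨hlA, hnA, hMA, hcA⟩ := hat_struct mA hfA
  obtain ⟨hlB, hnB, hMB, hcB⟩ := hat_struct mB hfB
  have key := CDom_complete (k := Ω) (S := AdicCompletion (baseI k₁ Ω mA) (Ω ⊗[k₁] A))
    (R := AdicCompletion (baseI k₂ Ω mB) (Ω ⊗[k₂] B))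
  rw [hMA, hMB] at key
  let i : A →+* AdicCompletion (baseI k₁ Ω mA) (Ω ⊗[k₁] A) := (algebraMap (Ω ⊗[k₁] A) _).comp
    (Algebra.TensorProduct.includeRight (R := k₁) (A := Ω) (B := A)).toRingHom
  let j : B →+* AdicCompletion (baseI k₂ Ω mB) (Ω ⊗[k₂] B) := (algebraMap (Ω ⊗[k₂] B) _).comp
    (Algebra.TensorProduct.includeRight (R := k₂) (A := Ω) (B := B)).toRingHom
  have hi : ∀ c, i (algebraMap k₁ A c) = algebraMap Ω _ (algebraMap k₁ Ω c) := by
    intro c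
    rw [IsScalarTower.algebraMap_apply Ω (Ω ⊗[k₁] A)]
    change algebraMap _ _ ((Algebra.TensorProduct.includeRight (R := k₁) (A := Ω) (B := A))
      (algebraMap k₁ A c)) = _
    rw [AlgHom.commutes, IsScalarTower.algebraMap_apply k₁ Ω (Ω ⊗[k₁] A)]
  have hj : ∀ c, j (algebraMap k₂ B c) = algebraMap Ω _ (algebraMap k₂ Ω c) := by
    intro c
    rw [IsScalarTower.algebraMap_apply Ω (Ω ⊗[k₂] B)]
    change algebraMap _ _ ((Algebra.TensorProduct.includeRight (R := k₂) (A := Ω) (B := B))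
      (algebraMap k₂ B c)) = _
    rw [AlgHom.commutes, IsScalarTower.algebraMap_apply k₂ Ω (Ω ⊗[k₂] B)]
  obtain ⟨ψ, hψ⟩ := exists_psi (k := k) i hi j hj
  refine CDom.transfer ψ _ _ ?_ key
  intro n z
  refine psi_mem_iff (k₁ := k₁) (k₂ := k₂) i j ψ hψ hinj _ _ _ _ ?_ ?_ ?_ ?_ z
  · rw [← Ideal.map_le_iff_le_comap, Ideal.map_pow, ← Ideal.map_map]
    exact le_rfl
  · rw [← Ideal.map_le_iff_le_comap, Ideal.map_pow, ← Ideal.map_map]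
    exact le_rfl
  · intro φ hφ
    exact extend_functional mA n φ hφ
  · intro φ hφ
    exact extend_functional mB n φ hφ


lemma isReduced_tensor_alg (k k₁ k₂ : Type*) [Field k] [PerfectField k] [Field k₁] [Field k₂]
    [Algebra k k₁] [Algebra k k₂] [Algebra.IsAlgebraic k k₂] : IsReduced (k₁ ⊗[k] k₂) := by
  apply IsReduced.tensorProduct_of_flat_of_forall_fg
  intro B hB
  have hf : IsField B := Subalgebra.isField_of_algebraic B
  have hft : Algebra.FiniteType k B := B.fg_iff_finiteType.1 hB
  have halg : Algebra.IsAlgebraic k B := Algebra.IsAlgebraic.of_injective B.val Subtype.val_injective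
  let := hf.toField
  have : Algebra.IsSeparable k B := Algebra.IsAlgebraic.isSeparable_of_perfectField
  have : Algebra.FormallyUnramified k B := Algebra.FormallyUnramified.of_isSeparable k B
  exact Algebra.FormallyUnramified.isReduced_of_field k₁ (k₁ ⊗[k] B)

lemma isField_of_idem {k R : Type*} [Field k] [CommRing R] [Algebra k R] [Algebra.IsAlgebraic k R]
    [Nontrivial R] [IsReduced R] (h : ∀ e : R, IsIdempotentElem e → e = 0 ∨ e = 1) : IsField R := by
  refine ⟨exists_pair_ne _, mul_comm, ?_⟩
  intro z hz
  obtain ⟨p, hp, hpz⟩ := Algebra.IsAlgebraic.isAlgebraic (R := k) z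
  obtain ⟨n, q, hq0, rfl⟩ : ∃ n q, Polynomial.coeff q 0 ≠ 0 ∧ p = Polynomial.X ^ n * q := by
    obtain ⟨q, hq, hq2⟩ := Polynomial.exists_eq_pow_rootMultiplicity_mul_and_not_dvd p hp 0
    refine ⟨_, q, ?_, by simpa using hq⟩
    rw [map_zero, sub_zero] at hq2
    rwa [Polynomial.X_dvd_iff] at hq2
  have hw : ∃ w : R, z ^ n = z ^ (n + 1) * w := by
    have h1 := Polynomial.divX_mul_X_add q
    rw [← h1] at hpz
    simp only [map_mul, map_pow, map_add, Polynomial.aeval_X, Polynomial.aeval_C] at hpz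
    refine ⟨- Polynomial.aeval z q.divX * algebraMap k R (q.coeff 0)⁻¹, ?_⟩
    have h2 : algebraMap k R (q.coeff 0) * algebraMap k R (q.coeff 0)⁻¹ = 1 := by
      rw [← map_mul, mul_inv_cancel₀ hq0, map_one]
    linear_combination (algebraMap k R (q.coeff 0)⁻¹) * hpz - z ^ n * h2
  obtain ⟨w, hw⟩ := hw
  have hj : ∀ j, z ^ n = z ^ (n + j) * w ^ j := by
    intro j
    induction j with
    | zero => simp
    | succ j ih =>
      calc z ^ n = z ^ (n + j) * w ^ j := ih
        _ = z ^ n * (z ^ j * w ^ j) := by ring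
        _ = z ^ (n + 1) * w * (z ^ j * w ^ j) := by rw [← hw]
        _ = _ := by ring
  have hj' := hj (n + 1)
  have hid : IsIdempotentElem (z ^ (n + 1) * w ^ (n + 1)) := by
    change z ^ (n + 1) * w ^ (n + 1) * (z ^ (n + 1) * w ^ (n + 1)) = _
    calc _ = z * w ^ (n + 1) * (z ^ (n + (n + 1)) * w ^ (n + 1)) := by ring
      _ = z * w ^ (n + 1) * z ^ n := by rw [← hj']
      _ = _ := by ring
  rcases h _ hid with h0 | h0
  · exfalso
    apply hz
    apply IsReduced.eq_zero
    refine ⟨n, ?_⟩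
    rw [hj']
    calc _ = z ^ n * (z ^ (n + 1) * w ^ (n + 1)) := by ring
      _ = 0 := by rw [h0, mul_zero]
  · exact ⟨z ^ n * w ^ (n + 1), by rw [← h0]; ring⟩

lemma idem_of_connected {R : Type*} [CommRing R] [ConnectedSpace (PrimeSpectrum R)] (e : R)
    (he : IsIdempotentElem e) : e = 0 ∨ e = 1 := by
  have h1 := (PrimeSpectrum.isIdempotentElemEquivClopens ⟨e, he⟩).isClopen
  rcases isClopen_iff.1 h1 with h | h
  · left
    have : PrimeSpectrum.isIdempotentElemEquivClopens ⟨e, he⟩ = ⊥ := by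
      ext1; exact h
    have h2 := congrArg PrimeSpectrum.isIdempotentElemEquivClopens.symm this
    rw [OrderIso.symm_apply_apply, PrimeSpectrum.isIdempotentElemEquivClopens_symm_bot] at h2
    exact congrArg Subtype.val h2
  · right
    have : PrimeSpectrum.isIdempotentElemEquivClopens ⟨e, he⟩ = ⊤ := by
      ext1; exact h
    have h2 := congrArg PrimeSpectrum.isIdempotentElemEquivClopens.symm this
    rw [OrderIso.symm_apply_apply, PrimeSpectrum.isIdempotentElemEquivClopens_symm_top] at h2
    exact congrArg Subtype.val h2

lemma connected_of_idem {R : Type*} [CommRing R] [Nontrivial R]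
    (h : ∀ e : R, IsIdempotentElem e → e = 0 ∨ e = 1) : ConnectedSpace (PrimeSpectrum R) := by
  rw [connectedSpace_iff_clopen]
  refine ⟨inferInstance, fun s hs => ?_⟩
  let c : TopologicalSpace.Clopens (PrimeSpectrum R) := ⟨s, hs⟩
  rcases h _ (PrimeSpectrum.isIdempotentElemEquivClopens.symm c).2 with h0 | h0
  · left
    have : c = ⊥ := by
      apply (PrimeSpectrum.isIdempotentElemEquivClopens (R := R)).symm.injective
      rw [PrimeSpectrum.isIdempotentElemEquivClopens_symm_bot]
      exact Subtype.ext h0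
    exact congrArg (fun x : TopologicalSpace.Clopens (PrimeSpectrum R) => x.carrier) this
  · right
    have : c = ⊤ := by
      apply (PrimeSpectrum.isIdempotentElemEquivClopens (R := R)).symm.injective
      rw [PrimeSpectrum.isIdempotentElemEquivClopens_symm_top]
      exact Subtype.ext h0
    exact congrArg (fun x : TopologicalSpace.Clopens (PrimeSpectrum R) => x.carrier) this

lemma isDomain_of_CDom {C : Type*} [CommRing C] (r : Ideal C) (hr : r ≠ ⊤) (F : ℕ → Ideal C)
    (h1 : ∀ n, F n ≤ r ^ n) (h2 : ∀ n, r ^ (n + n) ≤ F n) (H : CDom F) :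
    IsDomain (AdicCompletion r C) := by
  have hnt : Nontrivial (AdicCompletion r C) := by
    have : Nontrivial (C ⧸ r ^ 1) := Ideal.Quotient.nontrivial_iff.2 (by rwa [pow_one])
    exact (AdicCompletion.evalₐ r 1).toRingHom.domain_nontrivial
  have key : ∀ (x : AdicCompletion r C) (f : ℕ → C),
      (∀ n, AdicCompletion.evalₐ r n x = Ideal.Quotient.mk _ (f n)) →
      (∀ n, f (n + n) ∈ F n) → x = 0 := by
    intro x f hf hF
    apply AdicCompletion.ext_evalₐ
    intro n
    rw [evalₐ_compat r (show n ≤ n + n by omega) x _ (hf (n + n)), map_zero,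
      Ideal.Quotient.eq_zero_iff_mem]
    exact h1 n (hF n)
  have : NoZeroDivisors (AdicCompletion r C) := by
    constructor
    intro x y hxy
    obtain ⟨f, hf, hf2⟩ := exists_reps r x
    obtain ⟨g, hg, hg2⟩ := exists_reps r y
    rcases H (fun n => f (n + n)) (fun n => g (n + n))
      (fun n => h2 n (hf2 _ _ (by omega))) (fun n => h2 n (hg2 _ _ (by omega))) (fun n => by
        apply h2 n
        rw [← Ideal.Quotient.eq_zero_iff_mem, map_mul, ← hf, ← hg, ← map_mul, hxy, map_zero]) with h | h
    · exact Or.inl (key x f hf h)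
    · exact Or.inr (key y g hg h)
  exact NoZeroDivisors.to_isDomain _

lemma idem_of_domain {C : Type*} [CommRing C] (r : Ideal C) (hfg : r.FG)
    (h : IsDomain (AdicCompletion r C)) (e : C ⧸ r) (he : IsIdempotentElem e) : e = 0 ∨ e = 1 := by
  obtain ⟨c, rfl⟩ := Ideal.Quotient.mk_surjective e
  have hc : c * c - c ∈ r := by
    rw [← Ideal.Quotient.eq, map_mul]; exact he
  let R := AdicCompletion r C
  let I : Ideal R := r.map (algebraMap C R)
  have hcomp : IsAdicComplete I R := complete_map r hfg
  have hI : ∀ t : C, algebraMap C R t ∈ I → t ∈ r := by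
    intro t ht
    have : algebraMap C R t ∈ I ^ 1 := by rwa [pow_one]
    rw [← evalₐ_eq_zero_iff r hfg, evalₐ_algebraMap, Ideal.Quotient.eq_zero_iff_mem, pow_one] at this
    exact this
  have hens : HenselianRing R I := inferInstance
  let a₀ : R := algebraMap C R c
  have ha₀ : a₀ * a₀ - a₀ ∈ I := by
    have := Ideal.mem_map_of_mem (algebraMap C R) hc
    rwa [map_sub, map_mul] at this
  obtain ⟨a, ha, ha2⟩ := hens.is_henselian (Polynomial.X ^ 2 - Polynomial.X) (by
      apply Polynomial.monic_X_pow_sub (n := 2)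
      exact Polynomial.degree_X_le.trans_lt (by norm_num)) a₀
      (by simpa [pow_two] using ha₀) (by
        refine IsUnit.of_mul_eq_one (Ideal.Quotient.mk I (2 * a₀ - 1)) ?_
        rw [← map_mul, ← map_one (Ideal.Quotient.mk I), Ideal.Quotient.eq]
        have := Ideal.mul_mem_left I 4 ha₀
        convert this using 1
        simp
        ring)
  have ha3 : a * (a - 1) = 0 := by
    have : a ^ 2 - a = 0 := by simpa [Polynomial.IsRoot] using ha
    linear_combination this
  rcases mul_eq_zero.1 ha3 with h0 | h0
  · left
    rw [Ideal.Quotient.eq_zero_iff_mem]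
    apply hI
    rw [h0, zero_sub, neg_mem_iff] at ha2
    exact ha2
  · right
    rw [← map_one (Ideal.Quotient.mk r), Ideal.Quotient.eq]
    apply hI
    rw [sub_eq_zero.1 h0, ← neg_mem_iff, neg_sub] at ha2
    rwa [map_sub, map_one]


lemma exists_coeff (k : Type*) (A : Type v) [Field k] [CommRing A] [IsDomain A]
    [Algebra k A] : ∃ (k₁ : Type v) (_ : Field k₁) (_ : Algebra k k₁) (_ : Algebra k₁ A),
      IsScalarTower k k₁ A ∧ Algebra.IsAlgebraic k k₁ ∧
      ∀ a : A, IsIntegral k a → a ∈ (algebraMap k₁ A).range := by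
  have hInt0 : Algebra.IsIntegral k (integralClosure k A) := inferInstance
  have hf : IsField (integralClosure k A) :=
    isField_of_isIntegral_of_isField' (R := k) (Field.toIsField k)
  let := hf.toField
  refine ⟨integralClosure k A, hf.toField, inferInstance, inferInstance, inferInstance,
    inferInstance, ?_⟩
  intro a ha
  exact ⟨⟨a, ha⟩, rfl⟩

section
variable {k k₁ A : Type*} [Field k] [Field k₁] [CommRing A] [IsDomain A] [Algebra k k₁]
  [Algebra k A] [Algebra k₁ A] [IsScalarTower k k₁ A] [Algebra.IsAlgebraic k k₁]

lemma coeff_H1 [IsIntegrallyClosed A] (hA : ∀ a : A, IsIntegral k a → a ∈ (algebraMap k₁ A).range)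
    (x : FractionRing A) (hx : IsAlgebraic k₁ x) : x ∈ (algebraMap k₁ (FractionRing A)).range := by
  have h1 : IsIntegral k x := isIntegral_trans (A := k₁) x hx.isIntegral
  obtain ⟨a, rfl⟩ := (IsIntegrallyClosed.isIntegral_iff (R := A)).1 (h1.tower_top (A := A))
  rw [isIntegral_algebraMap_iff (IsFractionRing.injective A (FractionRing A))] at h1
  obtain ⟨c, rfl⟩ := hA a h1
  exact ⟨c, IsScalarTower.algebraMap_apply k₁ A _ c⟩

lemma coeff_H2 [PerfectField k₁] (m : Ideal A) [m.IsMaximal] [IsAdicComplete m A]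
    (hA : ∀ a : A, IsIntegral k a → a ∈ (algebraMap k₁ A).range)
    (x : A ⧸ m) (hx : IsAlgebraic k₁ x) : x ∈ (algebraMap k₁ (A ⧸ m)).range := by
  have hfield : IsField (A ⧸ m) := (Ideal.Quotient.maximal_ideal_iff_isField_quotient m).1 ‹_›
  have hxi : IsIntegral k₁ x := hx.isIntegral
  obtain ⟨a₀, rfl⟩ := Ideal.Quotient.mk_surjective x
  let p := minpoly k₁ (Ideal.Quotient.mk m a₀)
  have hp : Irreducible p := minpoly.irreducible hxi
  have hsep : p.Separable := PerfectField.separable_of_irreducible hp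
  have hev : ∀ q : Polynomial k₁, ∀ a, Ideal.Quotient.mk m ((q.map (algebraMap k₁ A)).eval a) =
      Polynomial.aeval (Ideal.Quotient.mk m a) q := by
    intro q a
    rw [Polynomial.eval_map, ← Polynomial.aeval_def]
    exact (Polynomial.aeval_algHom_apply (Ideal.Quotient.mkₐ k₁ m) a q).symm
  have hens : HenselianRing A m := inferInstance
  obtain ⟨a, ha, ha2⟩ := hens.is_henselian (p.map (algebraMap k₁ A))
    ((minpoly.monic hxi).map _) a₀ (by
      rw [← Ideal.Quotient.eq_zero_iff_mem, hev]
      exact minpoly.aeval _ _) (by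
      rw [Polynomial.derivative_map, hev]
      obtain ⟨u, w, huw⟩ := hsep
      have h := congrArg (Polynomial.aeval (Ideal.Quotient.mk m a₀)) huw
      have h0 : Polynomial.aeval (Ideal.Quotient.mk m a₀) p = 0 := minpoly.aeval _ _
      rw [map_add, map_mul, map_mul, h0, mul_zero, zero_add, map_one, mul_comm] at h
      exact IsUnit.of_mul_eq_one _ h)
  have hai : IsIntegral k₁ a := ⟨p, minpoly.monic hxi, by
    rw [← Polynomial.eval_map]; exact ha⟩
  obtain ⟨c, hc⟩ := hA a (isIntegral_trans (A := k₁) a hai)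
  refine ⟨c, ?_⟩
  rw [IsScalarTower.algebraMap_apply k₁ A, hc]
  exact Ideal.Quotient.eq.2 ha2

end

lemma exists_Omega0 {F : Type v} [CommRing F] (hF : IsField F) : ∃ (Ω : Type v) (_ : Field Ω)
    (i : F →+* Ω), IsAlgClosed Ω ∧ i.IsIntegral := by
  let := hF.toField
  refine ⟨AlgebraicClosure F, inferInstance, algebraMap F (AlgebraicClosure F), inferInstance, ?_⟩
  intro x
  exact Algebra.IsIntegral.isIntegral (R := F) x

section
variable {k : Type*} {k₁ : Type v} {k₂ : Type u} [Field k] [Field k₁] [Field k₂] [Algebra k k₁]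
  [Algebra k k₂] [Algebra.IsAlgebraic k k₁] [Algebra.IsAlgebraic k k₂]

lemma exists_Omega (hF : IsField (k₁ ⊗[k] k₂)) :
    ∃ (Ω : Type (max v u)) (_ : Field Ω) (_ : Algebra k Ω) (_ : Algebra k₁ Ω) (_ : Algebra k₂ Ω)
      (_ : IsScalarTower k k₁ Ω) (_ : IsScalarTower k k₂ Ω),
      IsAlgClosed Ω ∧ Algebra.IsAlgebraic k₁ Ω ∧ Algebra.IsAlgebraic k₂ Ω ∧
      Function.Injective (Algebra.TensorProduct.productMap
        (IsScalarTower.toAlgHom k k₁ Ω) (IsScalarTower.toAlgHom k k₂ Ω)) := by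
  obtain ⟨Ω, _, i, hΩ, hi⟩ := exists_Omega0 hF
  letI a0 : Algebra k Ω := (i.comp (algebraMap k (k₁ ⊗[k] k₂))).toAlgebra
  letI a1 : Algebra k₁ Ω := (i.comp
    (Algebra.TensorProduct.includeLeft (R := k) (S := k) (A := k₁) (B := k₂)).toRingHom).toAlgebra
  letI a2 : Algebra k₂ Ω := (i.comp
    (Algebra.TensorProduct.includeRight (R := k) (A := k₁) (B := k₂)).toRingHom).toAlgebra
  have t1 : IsScalarTower k k₁ Ω := IsScalarTower.of_algebraMap_eq fun c => by
    change i (algebraMap k (k₁ ⊗[k] k₂) c) = i (Algebra.TensorProduct.includeLeft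
      (R := k) (S := k) (A := k₁) (B := k₂) (algebraMap k k₁ c))
    rw [AlgHom.commutes]
  have t2 : IsScalarTower k k₂ Ω := IsScalarTower.of_algebraMap_eq fun c => by
    change i (algebraMap k (k₁ ⊗[k] k₂) c) = i (Algebra.TensorProduct.includeRight
      (R := k) (A := k₁) (B := k₂) (algebraMap k k₂ c))
    rw [AlgHom.commutes]
  have hInt0 : (algebraMap k (k₁ ⊗[k] k₂)).IsIntegral := by
    intro x
    have h1 : IsIntegral k₁ x := Algebra.IsIntegral.isIntegral x
    exact isIntegral_trans (A := k₁) x h1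
  have hInt2 : Algebra.IsIntegral k Ω := ⟨RingHom.IsIntegral.trans _ i hInt0 hi⟩
  have halg : Algebra.IsAlgebraic k Ω := inferInstance
  refine ⟨Ω, inferInstance, a0, a1, a2, t1, t2, hΩ, Algebra.IsAlgebraic.tower_top (K := k) k₁,
    Algebra.IsAlgebraic.tower_top (K := k) k₂, ?_⟩
  have hinj : Function.Injective i := by
    let := hF.toField
    exact i.injective
  intro x y hxy
  apply hinj
  have h : ∀ z, Algebra.TensorProduct.productMap
        (IsScalarTower.toAlgHom k k₁ Ω) (IsScalarTower.toAlgHom k k₂ Ω) z = i z := by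
    intro z
    induction z with
    | zero => simp
    | add x y hx hy => simp only [map_add, hx, hy]
    | tmul x y =>
      rw [Algebra.TensorProduct.productMap_apply_tmul]
      change i (x ⊗ₜ 1) * i (1 ⊗ₜ y) = _
      rw [← map_mul]
      simp
  rw [← h, ← h, hxy]

lemma isField_coeff [PerfectField k] {KA KB : Type*} [CommRing KA] [CommRing KB] [Nontrivial KA]
    [Nontrivial KB] [Algebra k KA] [Algebra k KB] [Algebra k₁ KA] [Algebra k₂ KB]
    [IsScalarTower k k₁ KA] [IsScalarTower k k₂ KB]
    (h : ∀ e : KA ⊗[k] KB, IsIdempotentElem e → e = 0 ∨ e = 1) : IsField (k₁ ⊗[k] k₂) := by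
  have : IsReduced (k₁ ⊗[k] k₂) := isReduced_tensor_alg k k₁ k₂
  apply isField_of_idem (k := k₁)
  intro e he
  let g := Algebra.TensorProduct.map (IsScalarTower.toAlgHom k k₁ KA) (IsScalarTower.toAlgHom k k₂ KB)
  have hg : Function.Injective g := by
    apply TensorProduct.map_injective_of_flat_flat (IsScalarTower.toAlgHom k k₁ KA).toLinearMap
      (IsScalarTower.toAlgHom k k₂ KB).toLinearMap
    · exact (algebraMap k₁ KA).injective
    · exact (algebraMap k₂ KB).injective
  rcases h (g e) (he.map g) with h0 | h0
  · left
    exact hg (h0.trans (map_zero g).symm)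
  · right
    exact hg (h0.trans (map_one g).symm)

end


lemma tensorRadical_eq (k A B : Type*) [Field k] [CommRing A] [CommRing B] [IsLocalRing A]
    [IsLocalRing B] [Algebra k A] [Algebra k B] : tensorRadical k A B =
      tf k (IsLocalRing.maximalIdeal A) (IsLocalRing.maximalIdeal B) := by
  rw [tensorRadical, tf, IsLocalRing.jacobson_eq_maximalIdeal _ bot_ne_top,
    IsLocalRing.jacobson_eq_maximalIdeal _ bot_ne_top]

/-- **Statement 17.** Let `k` be a perfect field, `A` and `B` two complete Noetherian
local commutative rings containing `k`, with maximal ideals `m` and `n`, such that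
`A ⊗̂[k] B` is Noetherian. If `A` and `B` are integrally closed domains, then
`A ⊗̂[k] B` is a domain if and only if `Spec ((A ⧸ m) ⊗[k] (B ⧸ n))` is connected
(equivalently, `(A ⧸ m) ⊗[k] (B ⧸ n)` has no idempotents other than `0` and `1`). -/
theorem isDomain_completedTensor_iff_connected (k A B : Type*) [Field k] [PerfectField k]
    [CommRing A] [CommRing B] [IsNoetherianRing A] [IsNoetherianRing B]
    [IsLocalRing A] [IsLocalRing B]
    [IsAdicComplete (IsLocalRing.maximalIdeal A) A]
    [IsAdicComplete (IsLocalRing.maximalIdeal B) B]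
    [Algebra k A] [Algebra k B]
    [IsDomain A] [IsDomain B] [IsIntegrallyClosed A] [IsIntegrallyClosed B]
    (hE : IsNoetherianRing (CompletedTensor k A B)) :
    IsDomain (CompletedTensor k A B) ↔
      ConnectedSpace (PrimeSpectrum
        ((A ⧸ IsLocalRing.maximalIdeal A) ⊗[k] (B ⧸ IsLocalRing.maximalIdeal B))) := by
  have hrad := tensorRadical_eq k A B
  have hntA : Nontrivial (A ⧸ IsLocalRing.maximalIdeal A) :=
    Ideal.Quotient.nontrivial_iff.2 (Ideal.IsPrime.ne_top inferInstance)
  have hntB : Nontrivial (B ⧸ IsLocalRing.maximalIdeal B) :=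
    Ideal.Quotient.nontrivial_iff.2 (Ideal.IsPrime.ne_top inferInstance)
  have hnt : Nontrivial ((A ⧸ IsLocalRing.maximalIdeal A) ⊗[k] (B ⧸ IsLocalRing.maximalIdeal B)) :=
    inferInstance
  let g := Algebra.TensorProduct.map (Ideal.Quotient.mkₐ k (IsLocalRing.maximalIdeal A))
      (Ideal.Quotient.mkₐ k (IsLocalRing.maximalIdeal B))
  have hker : tensorRadical k A B = RingHom.ker g := hrad.trans (tf_eq_ker _ _)
  have hg : Function.Surjective g := TensorProduct.map_surjective
    (Ideal.Quotient.mkₐ_surjective k _) (Ideal.Quotient.mkₐ_surjective k _)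
  constructor
  · intro hdom
    apply connected_of_idem
    intro e he
    obtain ⟨c, rfl⟩ := hg e
    have hfg : (tensorRadical k A B).FG := by
      rw [hrad, tf]
      exact Submodule.FG.sup (Ideal.FG.map (IsNoetherian.noetherian _) _)
        (Ideal.FG.map (IsNoetherian.noetherian _) _)
    have hc : IsIdempotentElem (Ideal.Quotient.mk (tensorRadical k A B) c) := by
      change _ * _ = _
      rw [← map_mul, Ideal.Quotient.eq, hker, RingHom.mem_ker, map_sub, map_mul, sub_eq_zero]
      exact he
    rcases idem_of_domain _ hfg hdom _ hc with h | h
    · left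
      rwa [Ideal.Quotient.eq_zero_iff_mem, hker, RingHom.mem_ker] at h
    · right
      rwa [← map_one (Ideal.Quotient.mk (tensorRadical k A B)), Ideal.Quotient.eq, hker,
        RingHom.mem_ker, map_sub, map_one, sub_eq_zero] at h
  · intro hconn
    obtain ⟨k₁, _, _, _, _, _, hA⟩ := exists_coeff k A
    obtain ⟨k₂, _, _, _, _, _, hB⟩ := exists_coeff k B
    have hF : IsField (k₁ ⊗[k] k₂) := isField_coeff (KA := A ⧸ IsLocalRing.maximalIdeal A)
      (KB := B ⧸ IsLocalRing.maximalIdeal B) idem_of_connected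
    obtain ⟨Ω, _, _, _, _, _, _, _, _, _, hinj⟩ := exists_Omega hF
    have hp1 : PerfectField k₁ := Algebra.IsAlgebraic.perfectField k
    have hp2 : PerfectField k₂ := Algebra.IsAlgebraic.perfectField k
    have hC := CDom_main (IsLocalRing.maximalIdeal A) (IsLocalRing.maximalIdeal B) hinj
      (coeff_H1 hA) (coeff_H1 hB) (coeff_H2 _ hA) (coeff_H2 _ hB)
    refine isDomain_of_CDom _ ?_ _ ?_ ?_ hC
    · rw [hker]
      exact RingHom.ker_ne_top g
    · intro n
      rw [hrad, tf, tf, Ideal.map_pow, Ideal.map_pow]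
      exact sup_le (Ideal.pow_right_mono le_sup_left n) (Ideal.pow_right_mono le_sup_right n)
    · intro n
      rw [hrad, tf, tf, Ideal.map_pow, Ideal.map_pow]
      exact Ideal.sup_pow_add_le_pow_sup_pow
end

section
/- Let A and B be two Noetherian local commutative rings containing a field k, with maximal ideals m and n respectively. Then the completed tensor product A⊗̂_k B is a Noetherian ring if and only if the tensor product of residue fields (A/m)⊗_k(B/n) is a Noetherian ring. -/
open TensorProduct

theorem ct_coeff_mem {S : Type*} [CommRing S] (J : Ideal S) (f : reesAlgebra J)
    (hf : f ∈ J.map (algebraMap S (reesAlgebra J))) (d : ℕ) :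
    (f : Polynomial S).coeff d ∈ J ^ (d + 1) := by
  revert d
  induction hf using Submodule.span_induction with
  | mem x h =>
    intro d
    obtain ⟨j, hj, rfl⟩ := h
    change (Polynomial.C j).coeff d ∈ _
    rw [Polynomial.coeff_C]
    split_ifs with h
    · subst h; simpa using hj
    · exact zero_mem _
  | zero => simp
  | add x y _ _ hx hy => intro d; simpa using add_mem (hx d) (hy d)
  | smul r x _ hx =>
    intro d
    simp only [smul_eq_mul, Subalgebra.coe_mul, Polynomial.coeff_mul]
    refine sum_mem fun p hp => ?_
    have h := Ideal.mul_mem_mul (r.2 p.1) (hx p.2)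
    rwa [← pow_add, ← add_assoc, Finset.HasAntidiagonal.mem_antidiagonal.mp hp] at h

theorem ct_noeth_gr {S : Type*} [CommRing S] (J : Ideal S) (hJ : J.FG)
    [IsNoetherianRing (S ⧸ J)] :
    IsNoetherianRing (reesAlgebra J ⧸ J.map (algebraMap S (reesAlgebra J))) := by
  have : Algebra.FiniteType S (reesAlgebra J) :=
    ⟨(reesAlgebra J).fg_top.mpr (reesAlgebra.fg hJ)⟩
  have : Algebra.FiniteType S (reesAlgebra J ⧸ J.map (algebraMap S (reesAlgebra J))) :=
    inferInstance
  have : Algebra.FiniteType (S ⧸ J) (reesAlgebra J ⧸ J.map (algebraMap S (reesAlgebra J))) :=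
    Algebra.FiniteType.of_restrictScalars_finiteType S _ _
  exact Algebra.FiniteType.isNoetherianRing (S ⧸ J)
    (reesAlgebra J ⧸ J.map (algebraMap S (reesAlgebra J)))

theorem ct_coeff_mul_monomial {S : Type*} [CommRing S] (f : Polynomial S) (n d : ℕ) (s : S) :
    (f * Polynomial.monomial n s).coeff d = if n ≤ d then f.coeff (d - n) * s else 0 := by
  rw [← Polynomial.C_mul_X_pow_eq_monomial, ← mul_assoc, Polynomial.coeff_mul_X_pow',
    Polynomial.coeff_mul_C]

theorem ct_step {S : Type*} [CommRing S] (J : Ideal S) (hJ : J.FG)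
    [IsNoetherianRing (S ⧸ J)] (a : Ideal S) :
    ∃ t : Finset {p : ℕ × S // p.2 ∈ a ∧ p.2 ∈ J ^ p.1},
      ∀ d : ℕ, ∀ y ∈ a, y ∈ J ^ d → ∃ c : {p : ℕ × S // p.2 ∈ a ∧ p.2 ∈ J ^ p.1} → S,
        (∀ p, c p ∈ J ^ (d - p.1.1)) ∧ y - ∑ p ∈ t, c p * p.1.2 ∈ J ^ (d + 1) := by
  classical
  have := ct_noeth_gr J hJ
  set K := J.map (algebraMap S (reesAlgebra J)) with hK
  let ψ : {p : ℕ × S // p.2 ∈ a ∧ p.2 ∈ J ^ p.1} → reesAlgebra J := fun p =>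
    ⟨Polynomial.monomial p.1.1 p.1.2, reesAlgebra.monomial_mem.mpr p.2.2⟩
  let φ : {p : ℕ × S // p.2 ∈ a ∧ p.2 ∈ J ^ p.1} → reesAlgebra J ⧸ K := fun p =>
    Ideal.Quotient.mk K (ψ p)
  obtain ⟨t', ht', hs⟩ := (Submodule.fg_span_iff_fg_span_finset_subset (Set.range φ)).mp
    (IsNoetherian.noetherian (Submodule.span (reesAlgebra J ⧸ K) (Set.range φ)))
  rw [← Set.image_univ, Finset.subset_set_image_iff] at ht'
  obtain ⟨t, -, rfl⟩ := ht'
  refine ⟨t, fun d y hya hyd => ?_⟩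
  have hmem : φ ⟨(d, y), hya, hyd⟩ ∈ Submodule.span (reesAlgebra J ⧸ K) (φ '' (t : Set _)) := by
    rw [← Finset.coe_image, ← hs]
    exact Submodule.subset_span ⟨_, rfl⟩
  obtain ⟨q, hq⟩ : ∃ q : {p : ℕ × S // p.2 ∈ a ∧ p.2 ∈ J ^ p.1} → reesAlgebra J ⧸ K,
      ∑ p ∈ t, q p * φ p = φ ⟨(d, y), hya, hyd⟩ := by
    obtain ⟨q, hq⟩ := (Submodule.mem_span_image_finset_iff_exists_fun _).mp hmem
    refine ⟨fun p => if h : p ∈ t then q ⟨p, h⟩ else 0, ?_⟩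
    rw [← hq, ← Finset.sum_coe_sort]
    refine Finset.sum_congr rfl fun p _ => ?_
    simp
  choose Q hQ using fun i => Ideal.Quotient.mk_surjective (q i)
  have hmem2 : ψ ⟨(d, y), hya, hyd⟩ - ∑ p ∈ t, Q p * ψ p ∈ K := by
    rw [← Ideal.Quotient.mk_eq_mk_iff_sub_mem, map_sum]
    simp only [map_mul, hQ]
    exact hq.symm
  have h3 := ct_coeff_mem J _ hmem2 d
  refine ⟨fun p => if p.1.1 ≤ d then (Q p : Polynomial S).coeff (d - p.1.1) else 0, ?_, ?_⟩
  · intro p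
    dsimp only
    split_ifs
    · exact (Q p).2 _
    · exact zero_mem _
  · convert h3 using 1
    simp only [ψ, AddSubgroupClass.coe_sub, Polynomial.coeff_sub, AddSubmonoidClass.coe_finsetSum,
      Polynomial.finsetSum_coeff, Subalgebra.coe_mul, ct_coeff_mul_monomial,
      Polynomial.coeff_monomial, if_true, ite_mul, zero_mul]

theorem ct_noeth_of_complete {S : Type*} [CommRing S] (J : Ideal S) (hJ : J.FG)
    [IsNoetherianRing (S ⧸ J)] [IsAdicComplete J S] : IsNoetherianRing S := by
  classical
  rw [isNoetherianRing_iff_ideal_fg]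
  intro a
  obtain ⟨t, ht⟩ := ct_step J hJ a
  choose! c hc hc' using ht
  refine ⟨t.image fun p => p.1.2, le_antisymm ?_ ?_⟩
  · rw [Submodule.span_le]
    intro x hx
    simp only [Finset.coe_image, Set.mem_image] at hx
    obtain ⟨p, -, rfl⟩ := hx
    exact p.2.1
  intro y hy
  -- remainders
  let Y : ℕ → S := fun d => Nat.rec y (fun d z => z - ∑ p ∈ t, c d z p * p.1.2) d
  have Y0 : Y 0 = y := rfl
  have Ys : ∀ d, Y (d + 1) = Y d - ∑ p ∈ t, c d (Y d) p * p.1.2 := fun d => rfl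
  have hY : ∀ d, Y d ∈ a ∧ Y d ∈ J ^ d := by
    intro d
    induction d with
    | zero => exact ⟨hy, by simp⟩
    | succ d ih =>
      rw [Ys]
      exact ⟨sub_mem ih.1 (sum_mem fun p _ => Ideal.mul_mem_left _ _ p.2.1), hc' d _ ih.1 ih.2⟩
  let e : {p : ℕ × S // p.2 ∈ a ∧ p.2 ∈ J ^ p.1} → ℕ → S := fun p n =>
    ∑ d ∈ Finset.range (n + p.1.1), c d (Y d) p
  have he : ∀ p, ∃ L : S, ∀ n, e p n - L ∈ J ^ n := by
    intro p
    obtain ⟨L, hL⟩ := IsPrecomplete.prec (I := J) (M := S) inferInstance (f := e p) (by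
      intro m n hmn
      rw [SModEq.comm, SModEq.sub_mem, smul_eq_mul, Ideal.mul_top]
      simp only [e]
      rw [← Finset.sum_range_add_sum_Ico _ (Nat.add_le_add_right hmn p.1.1), add_sub_cancel_left]
      refine sum_mem fun d hd => ?_
      have := (Finset.mem_Ico.mp hd).1
      exact Ideal.pow_le_pow_right (by omega) (hc d _ (hY d).1 (hY d).2 p))
    refine ⟨L, fun n => ?_⟩
    simpa [SModEq.sub_mem] using hL n
  choose L hL using he
  have hsum : ∀ n, y - ∑ p ∈ t, (∑ d ∈ Finset.range n, c d (Y d) p) * p.1.2 = Y n := by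
    intro n
    induction n with
    | zero => simp [Y0]
    | succ n ih =>
      rw [Ys]
      simp only [Finset.sum_range_succ, add_mul, Finset.sum_add_distrib]
      rw [← sub_sub, ih]
  have key : y - ∑ p ∈ t, L p * p.1.2 = 0 := by
    refine IsHausdorff.haus (I := J) (M := S) inferInstance _ fun n => ?_
    rw [SModEq.zero, smul_eq_mul, Ideal.mul_top]
    have h1 : y - ∑ p ∈ t, L p * p.1.2 = Y n +
        ∑ p ∈ t, ((∑ d ∈ Finset.range n, c d (Y d) p) - L p) * p.1.2 := by
      rw [← hsum n]
      simp only [sub_mul, Finset.sum_sub_distrib]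
      ring
    rw [h1]
    refine add_mem (hY n).2 (sum_mem fun p _ => ?_)
    have h2 : (∑ d ∈ Finset.range n, c d (Y d) p) - L p ∈ J ^ (n - p.1.1) := by
      by_cases h : p.1.1 ≤ n
      · have := hL p (n - p.1.1)
        simpa only [e, Nat.sub_add_cancel h] using this
      · rw [Nat.sub_eq_zero_of_le (by omega)]; simp
    have h3 := Ideal.mul_mem_mul h2 p.2.2
    rw [← pow_add] at h3
    exact Ideal.pow_le_pow_right (by omega) h3
  rw [sub_eq_zero.mp key]
  refine sum_mem fun p hp => Ideal.mul_mem_left _ _ (Submodule.subset_span ?_)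
  simp only [Finset.coe_image]
  exact ⟨p, hp, rfl⟩

theorem ct_completion {R : Type*} [CommRing R] (I : Ideal R) (hI : I.FG) :
    IsNoetherianRing (AdicCompletion I R) ↔ IsNoetherianRing (R ⧸ I) := by
  constructor
  · intro h
    exact isNoetherianRing_of_surjective _ _ (AdicCompletion.evalOneₐ I).toRingHom
      (AdicCompletion.evalOneₐ_surjective I)
  · intro h
    have := AdicCompletion.isAdicComplete (M := R) hI
    have : IsAdicComplete (I.map (algebraMap R (AdicCompletion I R))) (AdicCompletion I R) :=
      (IsAdicComplete.map_algebraMap_iff I (AdicCompletion I R)).mpr this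
    have : IsNoetherianRing
        (AdicCompletion I R ⧸ I.map (algebraMap R (AdicCompletion I R))) := by
      rw [← AdicCompletion.ker_evalOneₐ_eq_map I hI]
      exact isNoetherianRing_of_ringEquiv (R ⧸ I) (RingHom.quotientKerEquivOfSurjective
        (f := (AdicCompletion.evalOneₐ I).toRingHom) (AdicCompletion.evalOneₐ_surjective I)).symm
    exact ct_noeth_of_complete (I.map (algebraMap R (AdicCompletion I R))) (hI.map _)

/-- **Statement 18.** Let `A` and `B` be two Noetherian local commutative rings containing
a field `k`, with maximal ideals `m` and `n`. Then `A ⊗̂[k] B` is Noetherian if and only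
if `(A ⧸ m) ⊗[k] (B ⧸ n)` is Noetherian. -/
theorem isNoetherianRing_completedTensor_iff (k A B : Type*) [Field k]
    [CommRing A] [CommRing B] [IsNoetherianRing A] [IsNoetherianRing B]
    [IsLocalRing A] [IsLocalRing B] [Algebra k A] [Algebra k B] :
    IsNoetherianRing (CompletedTensor k A B) ↔
      IsNoetherianRing
        ((A ⧸ IsLocalRing.maximalIdeal A) ⊗[k] (B ⧸ IsLocalRing.maximalIdeal B)) := by
  have hm : (⊥ : Ideal A).jacobson = IsLocalRing.maximalIdeal A :=
    IsLocalRing.jacobson_eq_maximalIdeal ⊥ bot_ne_top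
  have hn : (⊥ : Ideal B).jacobson = IsLocalRing.maximalIdeal B :=
    IsLocalRing.jacobson_eq_maximalIdeal ⊥ bot_ne_top
  have hfg : (tensorRadical k A B).FG :=
    Submodule.FG.sup (Ideal.FG.map (IsNoetherian.noetherian _) _)
      (Ideal.FG.map (IsNoetherian.noetherian _) _)
  rw [ct_completion _ hfg]
  let f := Ideal.Quotient.mkₐ k (IsLocalRing.maximalIdeal A)
  let g := Ideal.Quotient.mkₐ k (IsLocalRing.maximalIdeal B)
  have hf : Function.Surjective f := Ideal.Quotient.mkₐ_surjective _ _
  have hg : Function.Surjective g := Ideal.Quotient.mkₐ_surjective _ _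
  have hker : tensorRadical k A B = RingHom.ker (Algebra.TensorProduct.map f g).toRingHom := by
    have h := Algebra.TensorProduct.map_ker f g hf hg
    have hf' : RingHom.ker f = IsLocalRing.maximalIdeal A := Ideal.Quotient.mkₐ_ker k _
    have hg' : RingHom.ker g = IsLocalRing.maximalIdeal B := Ideal.Quotient.mkₐ_ker k _
    rw [hf', hg'] at h
    rw [tensorRadical, hm, hn]
    exact h.symm
  rw [hker]
  have hs : Function.Surjective (Algebra.TensorProduct.map f g).toRingHom :=
    TensorProduct.map_surjective hf hg
  let E := RingHom.quotientKerEquivOfSurjective hs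
  exact ⟨fun h => isNoetherianRing_of_ringEquiv _ E, fun h => isNoetherianRing_of_ringEquiv _ E.symm⟩
end
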